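/- arXiv:1801.00186 — 2 statements merged into one kernel-verified Lean document; each statement's English description precedes it below -/
import Mathlib

section
/- Let μ be a real number with μ > −1. Then for every measurable function f : ℝ^n → [0,∞], ∫_{S^{n-1}} ∫_ℝ Rf(θ,t) · |t|^μ dt d*θ = (Γ(n/2)/Γ(1/2)) · (Γ((μ+1)/2)/Γ((μ+n)/2)) · ∫_{ℝ^n} f(x) |x|^μ dx, where both sides are elements of [0,∞] and the equality holds in [0,∞]. (This is the exact L^1 identity for the k-plane transform in the case k = n−1.) -/
open MeasureTheory Metric Real
open scoped ENNReal

noncomputable section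

/-- The normalized (probability) surface measure `d*θ` on the unit sphere of
`EuclideanSpace ℝ (Fin n)`. -/
def sphMeasure (n : ℕ) : Measure (sphere (0 : EuclideanSpace ℝ (Fin n)) 1) :=
  ((volume : Measure (EuclideanSpace ℝ (Fin n))).toSphere Set.univ)⁻¹ •
    (volume : Measure (EuclideanSpace ℝ (Fin n))).toSphere

/-- The hyperplane Radon transform: `Rf(θ,t) = ∫_{θ^⊥} f(tθ + y) dy`, where `θ^⊥` carries its
canonical Lebesgue measure as an (n-1)-dimensional inner product space. -/
def Radon (n : ℕ) (f : EuclideanSpace ℝ (Fin n) → ℝ≥0∞)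
    (θ : sphere (0 : EuclideanSpace ℝ (Fin n)) 1) (t : ℝ) : ℝ≥0∞ :=
  ∫⁻ y : ((ℝ ∙ (θ : EuclideanSpace ℝ (Fin n)))ᗮ),
    f (t • (θ : EuclideanSpace ℝ (Fin n)) + (y : EuclideanSpace ℝ (Fin n)))

/-!
For each direction `θ`, Fubini along `ℝθ ⊕ θ^⊥` turns `∫ Rf(θ,t) |t|^μ dt` into
`∫ f(x) |⟪θ, x⟫|^μ dx`. Exchanging the integrals leaves the spherical average of `|⟪θ, x⟫|^μ`, which
is `‖x‖^μ` times a constant independent of `x`. To find it, integrate `|⟪u, x⟫|^q exp(-‖x‖^2)`, for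
a unit vector `u`, both by slicing orthogonally to `u` and in polar coordinates: each way the
integral is a product of a Gamma value and one unknown, the Gaussian integral `G` over `u^⊥` or the
spherical moment. The quotient of the identities for `q = μ` and `q = 0` eliminates `G`.
-/

section HyperplaneSlicing

variable {E : Type*} [NormedAddCommGroup E] [InnerProductSpace ℝ E]

lemma inner_smul_add_orthogonal {u : E} (hu : ‖u‖ = 1) (t : ℝ) (y : (ℝ ∙ u)ᗮ) :
    inner ℝ u (t • u + (y : E)) = t := by
  have huy : inner ℝ u (y : E) = 0 := Submodule.mem_orthogonal_singleton_iff_inner_right.1 y.2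
  simp [inner_add_right, inner_smul_right, huy, hu]

lemma norm_smul_add_orthogonal_sq {u : E} (hu : ‖u‖ = 1) (t : ℝ) (y : (ℝ ∙ u)ᗮ) :
    ‖t • u + (y : E)‖ ^ 2 = t ^ 2 + ‖y‖ ^ 2 := by
  have huy : inner ℝ u (y : E) = 0 := Submodule.mem_orthogonal_singleton_iff_inner_right.1 y.2
  simp [norm_add_sq_real, inner_smul_left, huy, norm_smul, hu]

variable [FiniteDimensional ℝ E] [MeasurableSpace E] [BorelSpace E]

/-- The hyperplane Radon transform on an arbitrary Euclidean space, generalizing `Radon`: for a unit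
vector `u`, the integral of `f` over the hyperplane `{x | ⟪u, x⟫ = t}`. The condition `‖u‖ = 1` is
left to the lemmas, so that `u` can be an element of `E` rather than of its sphere. -/
def hyperplaneIntegral (f : E → ℝ≥0∞) (u : E) (t : ℝ) : ℝ≥0∞ :=
  ∫⁻ y : (ℝ ∙ u)ᗮ, f (t • u + (y : E))

lemma measurePreserving_smul_add_orthogonal {u : E} (hu : ‖u‖ = 1) :
    MeasurePreserving fun p : ℝ × (ℝ ∙ u)ᗮ ↦ p.1 • u + (p.2 : E) := by
  have line := (LinearIsometryEquiv.toSpanUnitSingleton (𝕜 := ℝ) u hu).measurePreserving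
  exact (ℝ ∙ u).orthogonalDecomposition.symm.measurePreserving.comp <|
    (WithLp.volume_preserving_toLp _ _).comp <| line.prod (.id volume)

lemma aemeasurable_comp_smul_add_orthogonal {f : E → ℝ≥0∞} (hf : AEMeasurable f) {u : E}
    (hu : ‖u‖ = 1) : AEMeasurable fun p : ℝ × (ℝ ∙ u)ᗮ ↦ f (p.1 • u + (p.2 : E)) :=
  hf.comp_quasiMeasurePreserving (measurePreserving_smul_add_orthogonal hu).quasiMeasurePreserving

lemma lintegral_hyperplaneIntegral {f : E → ℝ≥0∞} (hf : AEMeasurable f) {u : E} (hu : ‖u‖ = 1) :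
    ∫⁻ t, hyperplaneIntegral f u t = ∫⁻ x, f x := by
  have hT := measurePreserving_smul_add_orthogonal hu
  rw [← hT.map_eq, lintegral_map' (hT.map_eq.symm ▸ hf) hT.aemeasurable]
  exact (lintegral_prod _ (aemeasurable_comp_smul_add_orthogonal hf hu)).symm

lemma hyperplaneIntegral_mul_comp_inner_ae_eq {f : E → ℝ≥0∞} (hf : AEMeasurable f) {u : E}
    (hu : ‖u‖ = 1) (w : ℝ → ℝ≥0∞) :
    ∀ᵐ t, hyperplaneIntegral (fun x ↦ f x * w (inner ℝ u x)) u t =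
      hyperplaneIntegral f u t * w t := by
  filter_upwards [(aemeasurable_comp_smul_add_orthogonal hf hu).aestronglyMeasurable.prodMk_left]
    with t ht
  simp only [hyperplaneIntegral, inner_smul_add_orthogonal hu]
  exact lintegral_mul_const'' _ ht.aemeasurable

lemma lintegral_hyperplaneIntegral_mul {f : E → ℝ≥0∞} (hf : AEMeasurable f) {u : E}
    (hu : ‖u‖ = 1) {w : ℝ → ℝ≥0∞} (hw : Measurable w) :
    ∫⁻ t, hyperplaneIntegral f u t * w t = ∫⁻ x, f x * w (inner ℝ u x) := by
  rw [← lintegral_hyperplaneIntegral (by fun_prop) hu]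
  exact (lintegral_congr_ae (hyperplaneIntegral_mul_comp_inner_ae_eq hf hu w)).symm

lemma lintegral_sphere_hyperplaneIntegral_mul (σ : Measure (sphere (0 : E) 1)) [SFinite σ]
    {f : E → ℝ≥0∞} (hf : AEMeasurable f) {w : ℝ → ℝ≥0∞} (hw : Measurable w) :
    ∫⁻ θ, ∫⁻ t, hyperplaneIntegral f (θ : E) t * w t ∂volume ∂σ =
      ∫⁻ x, f x * ∫⁻ θ, w (inner ℝ (θ : E) x) ∂σ := by
  calc ∫⁻ θ, ∫⁻ t, hyperplaneIntegral f (θ : E) t * w t ∂volume ∂σ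
      = ∫⁻ θ, ∫⁻ x, f x * w (inner ℝ (θ : E) x) ∂volume ∂σ :=
        lintegral_congr fun θ ↦ lintegral_hyperplaneIntegral_mul hf (norm_eq_of_mem_sphere θ) hw
    _ = ∫⁻ x, ∫⁻ θ, f x * w (inner ℝ (θ : E) x) ∂σ :=
        lintegral_lintegral_swap (hf.comp_snd.mul (by fun_prop))
    _ = ∫⁻ x, f x * ∫⁻ θ, w (inner ℝ (θ : E) x) ∂σ :=
        lintegral_congr fun x ↦ lintegral_const_mul _ (by fun_prop)

end HyperplaneSlicing

section GaussianMoments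

lemma lintegral_comp_abs (f : ℝ → ℝ≥0∞) : ∫⁻ t, f |t| = 2 * ∫⁻ t in Set.Ioi 0, f t := by
  have pos : ∫⁻ t in Set.Ioi 0, f |t| = ∫⁻ t in Set.Ioi 0, f t :=
    setLIntegral_congr_fun measurableSet_Ioi fun t ht ↦ by rw [abs_of_pos ht]
  have neg : ∫⁻ t in Set.Iio 0, f |t| = ∫⁻ t in Set.Ioi 0, f |t| := by
    simpa using (Measure.measurePreserving_neg (volume : Measure ℝ)).setLIntegral_comp_preimage_emb
      (MeasurableEquiv.neg ℝ).measurableEmbedding (fun t ↦ f |t|) (Set.Ioi 0)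
  rw [← lintegral_add_compl _ (measurableSet_Ioi (a := (0 : ℝ))), Set.compl_Ioi,
    ← restrict_Iio_eq_restrict_Iic, neg, pos, two_mul]

lemma lintegral_Ioi_rpow_mul_exp_neg_sq {q : ℝ} (hq : -1 < q) :
    ∫⁻ r in Set.Ioi (0 : ℝ), ENNReal.ofReal r ^ q * ENNReal.ofReal (exp (-r ^ 2)) =
      ENNReal.ofReal (Gamma ((q + 1) / 2) / 2) := by
  have moment : ∫ r in Set.Ioi (0 : ℝ), r ^ q * exp (-r ^ (2 : ℝ)) = Gamma ((q + 1) / 2) / 2 := by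
    rw [integral_rpow_mul_exp_neg_rpow two_pos hq]
    ring
  rw [← moment, ofReal_integral_eq_lintegral_ofReal
    (integrableOn_rpow_mul_exp_neg_rpow hq two_pos)]
  · refine setLIntegral_congr_fun measurableSet_Ioi fun r (hr : 0 < r) ↦ ?_
    rw [ENNReal.ofReal_rpow_of_pos hr, ← ENNReal.ofReal_mul (by positivity), rpow_two]
  · filter_upwards [ae_restrict_mem measurableSet_Ioi] with r (hr : 0 < r)
    rw [Pi.zero_apply]
    positivity

lemma lintegral_rpow_abs_mul_exp_neg_sq {q : ℝ} (hq : -1 < q) :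
    ∫⁻ t : ℝ, ENNReal.ofReal |t| ^ q * ENNReal.ofReal (exp (-t ^ 2)) =
      ENNReal.ofReal (Gamma ((q + 1) / 2)) := by
  have even := lintegral_comp_abs fun t ↦ ENNReal.ofReal t ^ q * ENNReal.ofReal (exp (-t ^ 2))
  simp only [sq_abs] at even
  rw [even, lintegral_Ioi_rpow_mul_exp_neg_sq hq, ← ENNReal.ofReal_ofNat,
    ← ENNReal.ofReal_mul zero_le_two, mul_div_cancel₀ _ two_ne_zero]

end GaussianMoments

section PolarCoordinates

lemma lintegral_volumeIoiPow (k : ℕ) {g : ℝ → ℝ≥0∞} (hg : Measurable g) :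
    ∫⁻ r, g r ∂(Measure.volumeIoiPow k) =
      ∫⁻ r in Set.Ioi (0 : ℝ), ENNReal.ofReal r ^ k * g r := by
  rw [Measure.volumeIoiPow, lintegral_withDensity_eq_lintegral_mul _ (by fun_prop) (by fun_prop),
    ← lintegral_subtype_comap measurableSet_Ioi]
  refine lintegral_congr fun r ↦ ?_
  rw [Pi.mul_apply, ENNReal.ofReal_pow r.2.out.le]

variable {E : Type*} [NormedAddCommGroup E] [NormedSpace ℝ E] [FiniteDimensional ℝ E]
  [MeasurableSpace E] [BorelSpace E] [Nontrivial E] (ν : Measure E) [ν.IsAddHaarMeasure]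

lemma lintegral_eq_lintegral_toSphere_lintegral_Ioi {g : E → ℝ≥0∞} (hg : Measurable g) :
    ∫⁻ x, g x ∂ν =
      ∫⁻ θ, ∫⁻ r in Set.Ioi (0 : ℝ),
        ENNReal.ofReal r ^ (Module.finrank ℝ E - 1) * g (r • (θ : E)) ∂volume ∂ν.toSphere := by
  have polar : Measurable fun p : sphere (0 : E) 1 × Set.Ioi (0 : ℝ) ↦ g ((p.2 : ℝ) • (p.1 : E)) :=
    by fun_prop
  calc ∫⁻ x, g x ∂ν
      = ∫⁻ x : ({0}ᶜ : Set E), g x ∂(ν.comap Subtype.val) := by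
        rw [lintegral_subtype_comap (measurableSet_singleton _).compl g, restrict_compl_singleton]
    _ = ∫⁻ p, g ((p.2 : ℝ) • (p.1 : E))
          ∂(ν.toSphere.prod (.volumeIoiPow (Module.finrank ℝ E - 1))) := by
        rw [← ν.measurePreserving_homeomorphUnitSphereProd.lintegral_comp polar]
        refine lintegral_congr fun x ↦ congrArg g ?_
        simp [smul_smul, norm_ne_zero_iff.2 x.2]
    _ = _ := by
        rw [lintegral_prod _ polar.aemeasurable]
        exact lintegral_congr fun θ ↦ lintegral_volumeIoiPow _ (g := fun r ↦ g (r • (θ : E)))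
          (by fun_prop)

lemma lintegral_mul_exp_neg_norm_sq_of_homogeneous {q : ℝ} (hq : 0 < q + Module.finrank ℝ E)
    {g : E → ℝ≥0∞} (hg : Measurable g)
    (homogeneous : ∀ (r : ℝ) (x : E), 0 < r → g (r • x) = ENNReal.ofReal r ^ q * g x) :
    ∫⁻ x, g x * ENNReal.ofReal (exp (-‖x‖ ^ 2)) ∂ν =
      ENNReal.ofReal (Gamma ((q + Module.finrank ℝ E) / 2) / 2) * ∫⁻ θ, g θ ∂ν.toSphere := by
  set d := Module.finrank ℝ E
  have hd1 : 1 ≤ d := Module.finrank_pos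
  rw [lintegral_eq_lintegral_toSphere_lintegral_Ioi ν (by fun_prop),
    ← lintegral_const_mul _ (by fun_prop)]
  refine lintegral_congr fun θ ↦ ?_
  have radial : ∫⁻ r in Set.Ioi (0 : ℝ),
      ENNReal.ofReal r ^ (q + d - 1) * ENNReal.ofReal (exp (-r ^ 2)) =
        ENNReal.ofReal (Gamma ((q + d) / 2) / 2) := by
    rw [lintegral_Ioi_rpow_mul_exp_neg_sq (by linarith), sub_add_cancel]
  rw [← radial, ← lintegral_mul_const _ (by fun_prop)]
  refine setLIntegral_congr_fun measurableSet_Ioi fun r (hr : 0 < r) ↦ ?_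
  have exponent : ENNReal.ofReal r ^ (q + d - 1) =
      ENNReal.ofReal r ^ (d - 1) * ENNReal.ofReal r ^ q := by
    rw [← ENNReal.rpow_natCast, ← ENNReal.rpow_add _ _ (by simpa using hr) ENNReal.ofReal_ne_top,
      Nat.cast_sub hd1]
    congr 1
    push_cast
    ring
  rw [homogeneous r θ hr, exponent, norm_smul, norm_eq_of_mem_sphere, mul_one, norm_eq_abs, sq_abs]
  ring

end PolarCoordinates

section SphericalMoments

variable {E : Type*} [NormedAddCommGroup E] [InnerProductSpace ℝ E] [FiniteDimensional ℝ E]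
  [MeasurableSpace E] [BorelSpace E]

lemma hyperplaneIntegral_exp_neg_norm_sq {u : E} (hu : ‖u‖ = 1) (t : ℝ) :
    hyperplaneIntegral (fun x : E ↦ ENNReal.ofReal (exp (-‖x‖ ^ 2))) u t =
      ENNReal.ofReal (exp (-t ^ 2)) * ∫⁻ y : (ℝ ∙ u)ᗮ, ENNReal.ofReal (exp (-‖y‖ ^ 2)) := by
  rw [hyperplaneIntegral, ← lintegral_const_mul _ (by fun_prop)]
  refine lintegral_congr fun y ↦ ?_
  rw [norm_smul_add_orthogonal_sq hu, neg_add, exp_add, ENNReal.ofReal_mul (exp_nonneg _)]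

lemma lintegral_rpow_abs_inner_mul_exp_neg_norm_sq {u : E} (hu : ‖u‖ = 1) {q : ℝ} (hq : -1 < q) :
    ∫⁻ x, ENNReal.ofReal |inner ℝ u x| ^ q * ENNReal.ofReal (exp (-‖x‖ ^ 2)) =
      ENNReal.ofReal (Gamma ((q + 1) / 2)) *
        ∫⁻ y : (ℝ ∙ u)ᗮ, ENNReal.ofReal (exp (-‖y‖ ^ 2)) := by
  simp_rw [mul_comm (_ ^ q)]
  rw [← lintegral_hyperplaneIntegral_mul (w := fun t ↦ ENNReal.ofReal |t| ^ q) (by fun_prop) hu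
      (by fun_prop), ← lintegral_rpow_abs_mul_exp_neg_sq hq, ← lintegral_mul_const _ (by fun_prop)]
  refine lintegral_congr fun t ↦ ?_
  rw [hyperplaneIntegral_exp_neg_norm_sq hu]
  ring

variable [Nontrivial E]

lemma lintegral_toSphere_rpow_abs_inner {u : E} (hu : ‖u‖ = 1) {q : ℝ} (hq : -1 < q) :
    ∫⁻ θ, ENNReal.ofReal |inner ℝ u (θ : E)| ^ q ∂(volume : Measure E).toSphere =
      ENNReal.ofReal (2 * Gamma ((q + 1) / 2) / Gamma ((q + Module.finrank ℝ E) / 2)) *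
        ∫⁻ y : (ℝ ∙ u)ᗮ, ENNReal.ofReal (exp (-‖y‖ ^ 2)) := by
  have hd : (1 : ℝ) ≤ Module.finrank ℝ E := mod_cast Module.finrank_pos (R := ℝ) (M := E)
  have homogeneous (r : ℝ) (x : E) (hr : 0 < r) : ENNReal.ofReal |inner ℝ u (r • x)| ^ q =
      ENNReal.ofReal r ^ q * ENNReal.ofReal |inner ℝ u x| ^ q := by
    rw [inner_smul_right, abs_mul, abs_of_pos hr, ENNReal.ofReal_mul hr.le,
      ENNReal.mul_rpow_of_ne_top ENNReal.ofReal_ne_top ENNReal.ofReal_ne_top]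
  have gaussian := lintegral_mul_exp_neg_norm_sq_of_homogeneous volume (by linarith)
    (g := fun x ↦ ENNReal.ofReal |inner ℝ u x| ^ q) (by fun_prop) homogeneous
  have radial_pos : 0 < Gamma ((q + Module.finrank ℝ E) / 2) / 2 :=
    half_pos (Gamma_pos_of_pos (by linarith))
  rw [lintegral_rpow_abs_inner_mul_exp_neg_norm_sq hu hq, eq_comm,
    ← ENNReal.eq_div_iff (by simpa using radial_pos) ENNReal.ofReal_ne_top,
    ENNReal.mul_div_right_comm, ← ENNReal.ofReal_div_of_pos radial_pos] at gaussian
  rw [gaussian, div_div_eq_mul_div, mul_comm 2]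

lemma laverage_toSphere_rpow_abs_inner {u : E} (hu : ‖u‖ = 1) {q : ℝ} (hq : -1 < q) :
    ⨍⁻ θ, ENNReal.ofReal |inner ℝ u (θ : E)| ^ q ∂(volume : Measure E).toSphere =
      ENNReal.ofReal (Gamma (Module.finrank ℝ E / 2) / Gamma (1 / 2) *
        (Gamma ((q + 1) / 2) / Gamma ((q + Module.finrank ℝ E) / 2))) := by
  have hd : (1 : ℝ) ≤ Module.finrank ℝ E := mod_cast Module.finrank_pos (R := ℝ) (M := E)
  have area := lintegral_toSphere_rpow_abs_inner hu (q := 0) (by norm_num)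
  simp only [ENNReal.rpow_zero, lintegral_one, zero_add] at area
  set G := ∫⁻ y : (ℝ ∙ u)ᗮ, ENNReal.ofReal (exp (-‖y‖ ^ 2))
  have area_coeff_pos : 0 < 2 * Gamma (1 / 2) / Gamma (Module.finrank ℝ E / 2) :=
    div_pos (mul_pos two_pos (Gamma_pos_of_pos (by norm_num))) (Gamma_pos_of_pos (by linarith))
  have area_ne_zero : (volume : Measure E).toSphere Set.univ ≠ 0 :=
    Measure.measure_univ_ne_zero.2 (Measure.toSphere_ne_zero _)
  have G_ne_zero : G ≠ 0 := right_ne_zero_of_mul (area ▸ area_ne_zero)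
  have G_ne_top : G ≠ ⊤ := (ENNReal.lt_top_of_mul_ne_top_right (area ▸ measure_ne_top _ _)
    (by simpa using area_coeff_pos)).ne
  rw [laverage_eq, lintegral_toSphere_rpow_abs_inner hu hq, area,
    ENNReal.mul_div_mul_right _ _ G_ne_zero G_ne_top, ← ENNReal.ofReal_div_of_pos area_coeff_pos]
  congr 1
  field_simp

lemma laverage_toSphere_rpow_abs_inner_of_ne_zero {x : E} (hx : x ≠ 0) {q : ℝ} (hq : -1 < q) :
    ⨍⁻ θ, ENNReal.ofReal |inner ℝ (θ : E) x| ^ q ∂(volume : Measure E).toSphere =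
      ENNReal.ofReal (Gamma (Module.finrank ℝ E / 2) / Gamma (1 / 2) *
        (Gamma ((q + 1) / 2) / Gamma ((q + Module.finrank ℝ E) / 2))) * ENNReal.ofReal ‖x‖ ^ q := by
  have hu : ‖‖x‖⁻¹ • x‖ = 1 := norm_smul_inv_norm hx
  rw [← laverage_toSphere_rpow_abs_inner hu hq, laverage, laverage,
    ← lintegral_mul_const _ (by fun_prop)]
  refine lintegral_congr fun θ ↦ ?_
  rw [← ENNReal.mul_rpow_of_ne_top ENNReal.ofReal_ne_top ENNReal.ofReal_ne_top,
    ← ENNReal.ofReal_mul (abs_nonneg _), real_inner_smul_left, real_inner_comm, abs_mul,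
    abs_of_nonneg (inv_nonneg.2 (norm_nonneg x)), mul_right_comm,
    inv_mul_cancel₀ (norm_ne_zero_iff.2 hx), one_mul]

end SphericalMoments

theorem stmt2_general {E : Type*} [NormedAddCommGroup E] [InnerProductSpace ℝ E]
    [FiniteDimensional ℝ E] [MeasurableSpace E] [BorelSpace E] [Nontrivial E] {μ : ℝ}
    (hμ : -1 < μ) {f : E → ℝ≥0∞} (hf : AEMeasurable f) :
    ⨍⁻ θ, ∫⁻ t, hyperplaneIntegral f (θ : E) t * ENNReal.ofReal |t| ^ μ
        ∂volume ∂(volume : Measure E).toSphere =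
      ENNReal.ofReal (Gamma (Module.finrank ℝ E / 2) / Gamma (1 / 2) *
          (Gamma ((μ + 1) / 2) / Gamma ((μ + Module.finrank ℝ E) / 2))) *
        ∫⁻ x, f x * ENNReal.ofReal ‖x‖ ^ μ := by
  rw [laverage, lintegral_sphere_hyperplaneIntegral_mul _ hf
      (w := fun t ↦ ENNReal.ofReal |t| ^ μ) (by fun_prop),
    ← lintegral_const_mul' _ _ ENNReal.ofReal_ne_top]
  refine lintegral_congr_ae ?_
  filter_upwards [Measure.ae_ne volume (0 : E)] with x hx
  rw [← laverage_eq', laverage_toSphere_rpow_abs_inner_of_ne_zero hx hμ, mul_left_comm]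

/-- The exact `L^1` weighted identity for the hyperplane Radon transform
(case `k = n-1`, `p = 1`). -/
theorem stmt2 (n : ℕ) (hn : 2 ≤ n) (μ : ℝ) (hμ : -1 < μ)
    (f : EuclideanSpace ℝ (Fin n) → ℝ≥0∞) (hf : Measurable f) :
    (∫⁻ θ, ∫⁻ t : ℝ, Radon n f θ t * ENNReal.ofReal |t| ^ μ ∂volume ∂(sphMeasure n)) =
      ENNReal.ofReal (Real.Gamma ((n : ℝ) / 2) / Real.Gamma (1 / 2) *
          (Real.Gamma ((μ + 1) / 2) / Real.Gamma ((μ + n) / 2))) *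
        ∫⁻ x, f x * ENNReal.ofReal ‖x‖ ^ μ := by
  have : NeZero n := ⟨by omega⟩
  simpa only [hyperplaneIntegral, Radon, laverage_eq', sphMeasure, finrank_euclideanSpace_fin] using
    stmt2_general hμ hf.aemeasurable
end
end

section
/- Set Ω = ( σ_{n-1}^n / (2 σ_n^{n−1}) )^{1/(n+1)}. Then for every measurable function f : ℝ^n → [0,∞], ( ∫_{S^{n-1}} ∫_ℝ (Rf(θ,t))^{n+1} dt d*θ )^{1/(n+1)} ≤ Ω · ( ∫_{ℝ^n} f(x)^{(n+1)/n} dx )^{n/(n+1)}. (This is the case k = n−1 of the sharp L^{(n+1)/(k+1)} → L^{n+1} estimate of Oberlin–Stein, Christ, and Drury for the k-plane transform, with the sharp constant Ω_k(n) = (2^{k-n} σ_k^n / σ_n^k)^{1/(n+1)} found by Drouot.) -/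
open MeasureTheory Metric Real
open scoped ENNReal NNReal

noncomputable section

/-- `σ_m = 2π^{(m+1)/2}/Γ((m+1)/2)`, the surface area of the unit sphere `S^m`. -/
def sphereArea (m : ℕ) : ℝ :=
  2 * Real.pi ^ (((m : ℝ) + 1) / 2) / Real.Gamma (((m : ℝ) + 1) / 2)

/-!
Put `d = n - 1`. For almost every `θ` the hyperplanes normal to `θ` are graphs over the last `d`
coordinates, and `∫ Rf(θ,t)^{n+1} dt` extends to a function of the normal vector homogeneous of
degree `-n`. Hence the left-hand side is `2 / σ_{n-1}` times `∫ (∫ f(⟨(1,y),c⟩, y) dy)^{n+1} dc`,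
the outer integral being over the coefficient vectors `c ∈ ℝ^n` of these graphs.

For a weight `h` on `ℝ^d` let `K` be the body in `ℝ^n` of the points `r(1,y)` with
`|r|^{n+1} < h(y)`. Up to constants its volume is `∫ h^{n/(n+1)}`, and the integral of
`|det(x₁, …, x_n)|` over `K^n` is `∫ ∏ h(y_i) |det((1,y₁), …, (1,y_n))|`. By Busemann's random
simplex inequality the latter is least, for given volume, when `K` is a centred ball, whence
`(∫ h^{n/(n+1)})^{n+1} ≤ C ∫ ∏ h(y_i) |det((1,y₁), …, (1,y_n))|`. Apply this to `h = f^{(n+1)/n}` on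
the graph with coefficients `c` and integrate in `c`: the determinant is the Jacobian of
`c ↦ (⟨(1,y_i),c⟩)_i`, so the right-hand side becomes at most `C (∫ f^{(n+1)/n})^n`.

Busemann's inequality follows by Steiner symmetrization, since bounded bodies can be brought
arbitrarily close to a ball. Along a family of parallel lines the determinant is a linear form in
the positions on the lines, so the point is that `∫ |∑ a_i s_i|` over a product of sets decreases
when each set is replaced by the centred interval of the same length. That interval is mapped onto
the set by a measure-preserving expanding map `S`. Passing to the odd part of `S` does not increase
the integral by the triangle inequality, and the odd part is at least `|t|` in absolute value at
`t`, so replacing it by the identity does not increase the integral either. The value of the moment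
for the ball is read off from the one for a Gaussian, which satisfies a recursion in the dimension.
-/

section OneDimensional

/-- The symmetric rearrangement of a set of reals of finite measure: the open interval centred at
the origin which has the same length. -/
def symmRearr (A : Set ℝ) : Set ℝ :=
  Set.Ioo (-(volume.real A / 2)) (volume.real A / 2)

lemma measurableSet_symmRearr (A : Set ℝ) : MeasurableSet (symmRearr A) :=
  measurableSet_Ioo

lemma volume_symmRearr {A : Set ℝ} (hA : volume A ≠ ∞) : volume (symmRearr A) = volume A := by
  rw [symmRearr, Real.volume_Ioo, sub_neg_eq_add, add_halves, ofReal_measureReal hA]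

lemma neg_mem_symmRearr {A : Set ℝ} {t : ℝ} (ht : t ∈ symmRearr A) : -t ∈ symmRearr A :=
  ⟨neg_lt_neg ht.2, neg_lt.1 ht.1⟩

instance (A : Set ℝ) : IsFiniteMeasure ((volume : Measure ℝ).restrict (symmRearr A)) :=
  ⟨by simp [symmRearr]⟩

instance (A : Set ℝ) : ((volume : Measure ℝ).restrict (symmRearr A)).IsNegInvariant where
  neg_eq_self := by
    have h := (Measure.measurePreserving_neg (volume : Measure ℝ)).restrict_preimage
      (measurableSet_symmRearr A)
    have hpre : Neg.neg ⁻¹' symmRearr A = symmRearr A :=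
      Set.ext fun t => ⟨fun ht => neg_neg t ▸ neg_mem_symmRearr ht, neg_mem_symmRearr⟩
    rw [hpre] at h
    exact h.map_eq

/-- The distribution function of Lebesgue measure on `A`, shifted so as to take its values in the
closure of `symmRearr A`. -/
def centredCDF (A : Set ℝ) (s : ℝ) : ℝ :=
  volume.real (A ∩ Set.Iic s) - volume.real A / 2

variable {A : Set ℝ}

lemma monotone_centredCDF (hA : volume A ≠ ∞) : Monotone (centredCDF A) := fun _ _ h =>
  sub_le_sub_right (measureReal_mono (Set.inter_subset_inter_right A (Set.Iic_subset_Iic.2 h))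
    (measure_ne_top_of_subset Set.inter_subset_left hA)) _

lemma centredCDF_sub_le (hA : volume A ≠ ∞) {a b : ℝ} (hab : a ≤ b) :
    centredCDF A b - centredCDF A a ≤ b - a := by
  have hsub : A ∩ Set.Iic b ⊆ A ∩ Set.Iic a ∪ Set.Ioc a b := fun s hs =>
    (le_or_gt s a).imp (fun h => ⟨hs.1, h⟩) fun h => ⟨h, hs.2⟩
  have h := (measureReal_mono hsub (measure_union_ne_top
    (measure_ne_top_of_subset Set.inter_subset_left hA) (by simp))).trans
    (measureReal_union_le _ _)
  rw [Real.volume_real_Ioc_of_le hab] at h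
  unfold centredCDF
  linarith

lemma continuous_centredCDF (hA : volume A ≠ ∞) : Continuous (centredCDF A) := by
  refine (LipschitzWith.of_le_add fun x y => ?_ : LipschitzWith 1 (centredCDF A)).continuous
  rcases le_total x y with h | h
  · exact (monotone_centredCDF hA h).trans (le_add_of_nonneg_right dist_nonneg)
  · rw [Real.dist_eq, abs_of_nonneg (sub_nonneg.2 h)]
    linarith [centredCDF_sub_le hA h]

lemma centredCDF_mem_Icc (hA : volume A ≠ ∞) (s : ℝ) :
    centredCDF A s ∈ Set.Icc (-(volume.real A / 2)) (volume.real A / 2) := by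
  have h₀ : 0 ≤ volume.real (A ∩ Set.Iic s) := measureReal_nonneg
  have h₁ : volume.real (A ∩ Set.Iic s) ≤ volume.real A :=
    measureReal_mono Set.inter_subset_left hA
  unfold centredCDF
  constructor <;> linarith

lemma tendsto_centredCDF_atTop (hA : volume A ≠ ∞) :
    Filter.Tendsto (centredCDF A) Filter.atTop (nhds (volume.real A / 2)) := by
  have h : Filter.Tendsto (fun s : ℝ => volume (A ∩ Set.Iic s)) Filter.atTop
      (nhds (volume (⋃ s : ℝ, A ∩ Set.Iic s))) :=
    tendsto_measure_iUnion_atTop fun _ _ h =>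
      Set.inter_subset_inter_right A (Set.Iic_subset_Iic.2 h)
  rw [← Set.inter_iUnion, Set.iUnion_Iic, Set.inter_univ] at h
  have h' := ((ENNReal.tendsto_toReal hA).comp h).sub_const (volume.real A / 2)
  rwa [← measureReal_def, sub_half] at h'

lemma tendsto_centredCDF_atBot (hA : MeasurableSet A) (hfin : volume A ≠ ∞) :
    Filter.Tendsto (centredCDF A) Filter.atBot (nhds (-(volume.real A / 2))) := by
  have h : Filter.Tendsto (fun s : ℝ => volume (A ∩ Set.Iic s)) Filter.atBot
      (nhds (volume (⋂ s : ℝ, A ∩ Set.Iic s))) :=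
    tendsto_measure_iInter_atBot (fun _ => (hA.inter measurableSet_Iic).nullMeasurableSet)
      (fun _ _ h => Set.inter_subset_inter_right A (Set.Iic_subset_Iic.2 h))
      ⟨0, measure_ne_top_of_subset Set.inter_subset_left hfin⟩
  rw [← Set.inter_iInter, iInter_Iic_eq_empty_iff.2 (by simp),
    Set.inter_empty, measure_empty] at h
  have h' := ((ENNReal.tendsto_toReal ENNReal.zero_ne_top).comp h).sub_const (volume.real A / 2)
  rwa [ENNReal.toReal_zero, zero_sub] at h'

lemma symmRearr_subset_range_centredCDF (hA : MeasurableSet A) (hfin : volume A ≠ ∞) :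
    symmRearr A ⊆ Set.range (centredCDF A) := by
  intro t ht
  obtain ⟨a, ha⟩ :=
    ((tendsto_centredCDF_atBot hA hfin).eventually (eventually_lt_nhds ht.1)).exists
  obtain ⟨b, hb⟩ := ((tendsto_centredCDF_atTop hfin).eventually (eventually_gt_nhds ht.2)).exists
  exact mem_range_of_exists_le_of_exists_ge (continuous_centredCDF hfin) ⟨a, ha.le⟩ ⟨b, hb.le⟩

lemma sub_le_sub_of_centredCDF_rightInvOn (hfin : volume A ≠ ∞) {S : ℝ → ℝ}
    (hS : Set.RightInvOn S (centredCDF A) (symmRearr A)) {t t' : ℝ} (ht : t ∈ symmRearr A)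
    (ht' : t' ∈ symmRearr A) (htt' : t ≤ t') : t' - t ≤ S t' - S t := by
  rcases le_total (S t) (S t') with h | h
  · simpa only [hS ht, hS ht'] using centredCDF_sub_le hfin h
  · have h' := monotone_centredCDF hfin h
    rw [hS ht, hS ht'] at h'
    rw [le_antisymm htt' h', sub_self, sub_self]

lemma map_restrict_symmRearr_of_centredCDF_rightInvOn (hfin : volume A ≠ ∞) {S : ℝ → ℝ}
    (hSm : Measurable S) (hS : Set.RightInvOn S (centredCDF A) (symmRearr A)) :
    (volume.restrict (symmRearr A)).map S = volume.restrict A := by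
  refine Measure.ext_of_Iic _ _ fun a => ?_
  have hupp := (centredCDF_mem_Icc hfin a).2
  have hvol : ENNReal.ofReal (centredCDF A a - -(volume.real A / 2)) =
      volume.restrict A (Set.Iic a) := by
    rw [centredCDF, sub_neg_eq_add, sub_add_cancel, Set.inter_comm,
      ofReal_measureReal (measure_ne_top_of_subset Set.inter_subset_right hfin),
      Measure.restrict_apply measurableSet_Iic]
  rw [Measure.map_apply hSm measurableSet_Iic, Measure.restrict_apply (hSm measurableSet_Iic),
    ← hvol]
  apply le_antisymm
  · rw [← Real.volume_Icc]
    refine measure_mono fun t ht => ⟨ht.2.1.le, ?_⟩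
    simpa only [hS ht.2] using monotone_centredCDF hfin (show S t ≤ a from ht.1)
  · rw [← Real.volume_Ioo]
    refine measure_mono fun t ht => ?_
    have ht' : t ∈ symmRearr A := ⟨ht.1, ht.2.trans_le hupp⟩
    refine ⟨le_of_not_ge fun h : a ≤ S t => ?_, ht'⟩
    exact ht.2.not_ge (by simpa only [hS ht'] using monotone_centredCDF hfin h)

lemma exists_expanding_map_symmRearr (hA : MeasurableSet A) (hfin : volume A ≠ ∞) :
    ∃ S : ℝ → ℝ, Measurable S ∧ (volume.restrict (symmRearr A)).map S = volume.restrict A ∧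
      ∀ t ∈ symmRearr A, ∀ t' ∈ symmRearr A, t ≤ t' → t' - t ≤ S t' - S t := by
  classical
  choose! S₀ hS₀ using symmRearr_subset_range_centredCDF hA hfin
  set S : ℝ → ℝ := (symmRearr A).piecewise S₀ 0 with hSdef
  have hS : Set.RightInvOn S (centredCDF A) (symmRearr A) := fun t ht => by
    rw [hSdef, Set.piecewise_eq_of_mem _ _ _ ht, hS₀ ht]
  have hexp := fun t ht t' ht' => sub_le_sub_of_centredCDF_rightInvOn hfin hS
    (t := t) (t' := t') ht ht'
  have hSm : Measurable S := by
    refine measurable_of_restrict_of_restrict_compl (measurableSet_symmRearr A)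
      (Monotone.measurable fun t t' h => ?_) ?_
    · linarith [hexp t t.2 t' t'.2 h, show (t : ℝ) ≤ t' from h,
        Set.domRestrict_apply S (symmRearr A) t, Set.domRestrict_apply S (symmRearr A) t']
    · rw [hSdef, Set.domRestrict_piecewise_compl]
      exact measurable_const.comp measurable_subtype_coe
  exact ⟨S, hSm, map_restrict_symmRearr_of_centredCDF_rightInvOn hfin hSm hS, hexp⟩

section Contraction

variable {ι : Type*} [Fintype ι] {ν : ι → Measure ℝ} [∀ i, SigmaFinite (ν i)]
  [∀ i, (ν i).IsNegInvariant]

lemma abs_add_add_abs_neg_add_le {p q : ℝ} (h : |p| ≤ |q|) (c : ℝ) :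
    |p + c| + |-p + c| ≤ |q + c| + |-q + c| := by
  have hmax (x : ℝ) : |x + c| + |-x + c| = 2 * max |x| |c| := by grind
  rw [hmax, hmax]
  gcongr

lemma two_mul_lintegral_enorm_sum_eq [DecidableEq ι] {z : ι → ℝ → ℝ} (hz : ∀ i, Measurable (z i))
    {j : ι} (hodd : ∀ t, z j (-t) = -z j t) :
    2 * ∫⁻ s : ι → ℝ, ‖∑ i, z i (s i)‖ₑ ∂Measure.pi ν =
      ∫⁻ s : ι → ℝ, ENNReal.ofReal (|z j (s j) + ∑ i ∈ Finset.univ.erase j, z i (s i)| +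
        |-z j (s j) + ∑ i ∈ Finset.univ.erase j, z i (s i)|) ∂Measure.pi ν := by
  set flip : (ι → ℝ) → ι → ℝ :=
    fun s i => (Function.update (fun _ => id) j Neg.neg : ι → ℝ → ℝ) i (s i) with hflip
  have hmp : MeasurePreserving flip (Measure.pi ν) (Measure.pi ν) := by
    refine measurePreserving_pi ν ν fun i => ?_
    rcases eq_or_ne i j with rfl | hij
    · simpa only [Function.update_self] using Measure.measurePreserving_neg (ν i)
    · simpa only [Function.update_of_ne hij] using MeasurePreserving.id (ν i)
  have hm : Measurable fun s : ι → ℝ => ‖∑ i, z i (s i)‖ₑ := by fun_prop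
  calc 2 * ∫⁻ s : ι → ℝ, ‖∑ i, z i (s i)‖ₑ ∂Measure.pi ν
      = ∫⁻ s, ‖∑ i, z i (s i)‖ₑ + ‖∑ i, z i (flip s i)‖ₑ ∂Measure.pi ν := by
        rw [lintegral_add_left hm, hmp.lintegral_comp hm, two_mul]
    _ = _ := lintegral_congr fun s => by
        have hrest : ∑ i ∈ Finset.univ.erase j, z i (flip s i) =
            ∑ i ∈ Finset.univ.erase j, z i (s i) :=
          Finset.sum_congr rfl fun i hi => by
            simp only [hflip, Function.update_of_ne (Finset.ne_of_mem_erase hi), id]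
        rw [← Finset.add_sum_erase _ (fun i => z i (s i)) (Finset.mem_univ j),
          ← Finset.add_sum_erase _ (fun i => z i (flip s i)) (Finset.mem_univ j), hrest,
          ENNReal.ofReal_add (abs_nonneg _) (abs_nonneg _), enorm_eq_ofReal_abs,
          enorm_eq_ofReal_abs]
        simp only [hflip, Function.update_self, hodd]

lemma lintegral_enorm_sum_update_le [DecidableEq ι] {z : ι → ℝ → ℝ} (hz : ∀ i, Measurable (z i))
    {j : ι} (hodd : ∀ t, z j (-t) = -z j t) {u : ℝ → ℝ} (hu : Measurable u)
    (huodd : ∀ t, u (-t) = -u t) (hle : ∀ᵐ t ∂ν j, |u t| ≤ |z j t|) :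
    ∫⁻ s : ι → ℝ, ‖∑ i, Function.update z j u i (s i)‖ₑ ∂Measure.pi ν ≤
      ∫⁻ s : ι → ℝ, ‖∑ i, z i (s i)‖ₑ ∂Measure.pi ν := by
  have hupd : ∀ i, Measurable (Function.update z j u i) := fun i => by
    rcases eq_or_ne i j with rfl | hij
    · rwa [Function.update_self]
    · rw [Function.update_of_ne hij]
      exact hz i
  rw [← ENNReal.mul_le_mul_iff_right two_ne_zero ENNReal.ofNat_ne_top,
    two_mul_lintegral_enorm_sum_eq hz hodd,
    two_mul_lintegral_enorm_sum_eq hupd (j := j) (by simpa only [Function.update_self] using huodd)]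
  refine lintegral_mono_ae ?_
  filter_upwards [(Measure.quasiMeasurePreserving_eval ν j).ae hle] with s hs
  have hrest : ∑ i ∈ Finset.univ.erase j, Function.update z j u i (s i) =
      ∑ i ∈ Finset.univ.erase j, z i (s i) :=
    Finset.sum_congr rfl fun i hi => by rw [Function.update_of_ne (Finset.ne_of_mem_erase hi)]
  rw [hrest, Function.update_self]
  exact ENNReal.ofReal_le_ofReal (abs_add_add_abs_neg_add_le hs _)

lemma lintegral_enorm_sum_le_of_abs_le {u z : ι → ℝ → ℝ} (hu : ∀ i, Measurable (u i))
    (hz : ∀ i, Measurable (z i)) (huodd : ∀ i t, u i (-t) = -u i t)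
    (hzodd : ∀ i t, z i (-t) = -z i t) (hle : ∀ i, ∀ᵐ t ∂ν i, |u i t| ≤ |z i t|) :
    ∫⁻ s : ι → ℝ, ‖∑ i, u i (s i)‖ₑ ∂Measure.pi ν ≤
      ∫⁻ s : ι → ℝ, ‖∑ i, z i (s i)‖ₑ ∂Measure.pi ν := by
  classical
  suffices h : ∀ F : Finset ι, ∫⁻ s : ι → ℝ, ‖∑ i, F.piecewise u z i (s i)‖ₑ ∂Measure.pi ν ≤
      ∫⁻ s : ι → ℝ, ‖∑ i, z i (s i)‖ₑ ∂Measure.pi ν by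
    simpa only [Finset.piecewise_univ] using h Finset.univ
  intro F
  induction F using Finset.induction_on with
  | empty => rw [Finset.piecewise_empty]
  | insert j F hj ih =>
    have hm : ∀ i, Measurable (F.piecewise u z i) :=
      fun i => F.piecewise_cases u z (fun w => Measurable w) (hu i) (hz i)
    have hzj : F.piecewise u z j = z j := F.piecewise_eq_of_notMem u z hj
    rw [Finset.piecewise_insert]
    exact (lintegral_enorm_sum_update_le hm (hzj ▸ hzodd j) (hu j) (huodd j)
      (hzj ▸ hle j)).trans ih

lemma lintegral_enorm_sum_oddPart_le {S : ι → ℝ → ℝ} (hS : ∀ i, Measurable (S i)) :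
    ∫⁻ s : ι → ℝ, ‖∑ i, (S i (s i) - S i (-s i)) / 2‖ₑ ∂Measure.pi ν ≤
      ∫⁻ s : ι → ℝ, ‖∑ i, S i (s i)‖ₑ ∂Measure.pi ν := by
  have hm : Measurable fun s : ι → ℝ => ‖∑ i, S i (s i)‖ₑ := by fun_prop
  have hneg : ∫⁻ s : ι → ℝ, ‖∑ i, S i (-s i)‖ₑ ∂Measure.pi ν =
      ∫⁻ s : ι → ℝ, ‖∑ i, S i (s i)‖ₑ ∂Measure.pi ν :=
    lintegral_neg_eq_self fun s : ι → ℝ => ‖∑ i, S i (s i)‖ₑ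
  rw [← ENNReal.mul_le_mul_iff_right two_ne_zero ENNReal.ofNat_ne_top]
  calc 2 * ∫⁻ s : ι → ℝ, ‖∑ i, (S i (s i) - S i (-s i)) / 2‖ₑ ∂Measure.pi ν
      = ∫⁻ s : ι → ℝ, ‖∑ i, S i (s i) - ∑ i, S i (-s i)‖ₑ ∂Measure.pi ν := by
        rw [← lintegral_const_mul _ (by fun_prop)]
        refine lintegral_congr fun s => ?_
        have htwo : ‖(2 : ℝ)‖ₑ = 2 := by simp [enorm_eq_ofReal_abs]
        rw [← Finset.sum_sub_distrib, ← Finset.sum_div, ← htwo, ← enorm_mul,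
          mul_div_cancel₀ _ two_ne_zero]
    _ ≤ ∫⁻ s : ι → ℝ, ‖∑ i, S i (s i)‖ₑ + ‖∑ i, S i (-s i)‖ₑ ∂Measure.pi ν :=
        lintegral_mono fun _ => enorm_sub_le
    _ = 2 * ∫⁻ s : ι → ℝ, ‖∑ i, S i (s i)‖ₑ ∂Measure.pi ν := by
        rw [lintegral_add_left hm, hneg, two_mul]

end Contraction

theorem lintegral_enorm_sum_symmRearr_le {ι : Type*} [Fintype ι] {A : ι → Set ℝ}
    (hA : ∀ i, MeasurableSet (A i)) (hfin : ∀ i, volume (A i) ≠ ∞) (a : ι → ℝ) :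
    ∫⁻ s, ‖∑ i, a i * s i‖ₑ ∂Measure.pi (fun i => (volume : Measure ℝ).restrict (symmRearr (A i))) ≤
      ∫⁻ s, ‖∑ i, a i * s i‖ₑ ∂Measure.pi (fun i => (volume : Measure ℝ).restrict (A i)) := by
  choose S hSm hmap hexp using fun i => exists_expanding_map_symmRearr (hA i) (hfin i)
  set ν : ι → Measure ℝ := fun i => volume.restrict (symmRearr (A i))
  have habs : ∀ i, ∀ t ∈ symmRearr (A i), |t| ≤ |(S i t - S i (-t)) / 2| := fun i t ht => by
    rcases le_total 0 t with h | h
    · rw [abs_of_nonneg h]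
      exact le_trans (by linarith [hexp i _ (neg_mem_symmRearr ht) _ ht (by linarith)])
        (le_abs_self _)
    · rw [abs_of_nonpos h]
      exact le_trans (by linarith [hexp i _ ht _ (neg_mem_symmRearr ht) (by linarith)])
        (neg_le_abs _)
  calc ∫⁻ s, ‖∑ i, a i * s i‖ₑ ∂Measure.pi ν
      ≤ ∫⁻ s, ‖∑ i, (a i * S i (s i) - a i * S i (-s i)) / 2‖ₑ ∂Measure.pi ν := by
        refine lintegral_enorm_sum_le_of_abs_le (u := fun i t => a i * t)
          (z := fun i t => (a i * S i t - a i * S i (-t)) / 2) (fun i => by fun_prop)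
          (fun i => by fun_prop) (fun i t => by ring) (fun i t => by rw [neg_neg]; ring) fun i => ?_
        filter_upwards [ae_restrict_mem (measurableSet_symmRearr (A i))] with t ht
        rw [← mul_sub, mul_div_assoc, abs_mul, abs_mul]
        exact mul_le_mul_of_nonneg_left (habs i t ht) (abs_nonneg _)
    _ ≤ ∫⁻ s, ‖∑ i, a i * S i (s i)‖ₑ ∂Measure.pi ν :=
        lintegral_enorm_sum_oddPart_le (S := fun i t => a i * S i t) fun i => by fun_prop
    _ = ∫⁻ s, ‖∑ i, a i * s i‖ₑ ∂Measure.pi (fun i => (volume : Measure ℝ).restrict (A i)) := by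
        have hpush : Measure.pi (fun i => (volume : Measure ℝ).restrict (A i)) =
            (Measure.pi ν).map fun s i => S i (s i) := by
          have hfinite : ∀ i, IsFiniteMeasure ((ν i).map (S i)) := fun i => inferInstance
          rw [Measure.pi_map_pi fun i => (hSm i).aemeasurable]
          simp only [ν, hmap]
        rw [hpush, lintegral_map (by fun_prop) (by fun_prop)]

end OneDimensional

section ProductMeasure

@[fun_prop]
lemma measurable_vecCons {α E : Type*} [MeasurableSpace α] [MeasurableSpace E] {k : ℕ} {f : α → E}
    {g : α → Fin k → E} (hf : Measurable f) (hg : Measurable g) :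
    Measurable fun a => Matrix.vecCons (f a) (g a) :=
  measurable_pi_iff.2 (Fin.cases hf fun i => (measurable_pi_apply i).comp hg)

@[fun_prop]
lemma measurable_vecTail {α E : Type*} [MeasurableSpace α] [MeasurableSpace E] {k : ℕ}
    {g : α → Fin (k + 1) → E} (hg : Measurable g) : Measurable fun a => Matrix.vecTail (g a) :=
  measurable_pi_iff.2 fun i => (measurable_pi_apply i.succ).comp hg

variable {E : Type*} [MeasureSpace E] [SigmaFinite (volume : Measure E)]

lemma measurePreserving_vecCons (k : ℕ) :
    MeasurePreserving fun p : E × (Fin k → E) => Matrix.vecCons p.1 p.2 := by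
  have h := (volume_preserving_piFinSuccAbove (fun _ : Fin (k + 1) => E) 0).symm
  rw [MeasurableEquiv.piFinSuccAbove_symm_apply, Fin.insertNthEquiv_zero] at h
  exact h

lemma lintegral_vecCons {k : ℕ} {F : (Fin (k + 1) → E) → ℝ≥0∞} (hF : Measurable F) :
    ∫⁻ x, F x = ∫⁻ x₀, ∫⁻ xs, F (Matrix.vecCons x₀ xs) := by
  rw [← (measurePreserving_vecCons k).lintegral_comp hF, Measure.volume_eq_prod,
    lintegral_prod _ (by fun_prop)]

lemma lintegral_vecCons_symm {k : ℕ} {F : (Fin (k + 1) → E) → ℝ≥0∞} (hF : Measurable F) :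
    ∫⁻ x, F x = ∫⁻ xs, ∫⁻ x₀, F (Matrix.vecCons x₀ xs) := by
  rw [lintegral_vecCons hF]
  exact lintegral_lintegral_swap (by fun_prop)

lemma lintegral_prod_mul_vecCons {k : ℕ} {w : E → ℝ≥0∞} (hw : Measurable w)
    {F : (Fin (k + 1) → E) → ℝ≥0∞} (hF : Measurable F) :
    ∫⁻ x, (∏ i, w (x i)) * F x =
      ∫⁻ x₀, w x₀ * ∫⁻ xs : Fin k → E, (∏ i, w (xs i)) * F (Matrix.vecCons x₀ xs) := by
  rw [lintegral_vecCons (by fun_prop)]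
  refine lintegral_congr fun x₀ => ?_
  rw [← lintegral_const_mul _ (by fun_prop)]
  refine lintegral_congr fun xs => ?_
  simp only [Fin.prod_univ_succ, Matrix.cons_val_zero, Matrix.cons_val_succ, mul_assoc]

lemma lintegral_prod_eq_prod {k : ℕ} {w : Fin k → E → ℝ≥0∞} (hw : ∀ i, Measurable (w i)) :
    ∫⁻ x : Fin k → E, ∏ i, w i (x i) = ∏ i, ∫⁻ x, w i x := by
  induction k with
  | zero => simp [volume_pi]
  | succ k ih =>
    rw [lintegral_vecCons (by fun_prop), Fin.prod_univ_succ, ← ih fun i => hw i.succ,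
      ← lintegral_mul_const _ (hw 0)]
    refine lintegral_congr fun x₀ => ?_
    rw [← lintegral_const_mul _ (by fun_prop)]
    simp only [Fin.prod_univ_succ, Matrix.cons_val_zero, Matrix.cons_val_succ]

lemma lintegral_prod_mul_comp {E' : Type*} [MeasureSpace E'] [SigmaFinite (volume : Measure E')]
    {T : E' → E} (hT : Measurable T) {w : E → ℝ≥0∞} (hw : Measurable w) {v : E' → ℝ≥0∞}
    (hv : Measurable v)
    (h : ∀ G : E → ℝ≥0∞, Measurable G → ∫⁻ x, w x * G x = ∫⁻ z, v z * G (T z)) {k : ℕ}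
    {F : (Fin k → E) → ℝ≥0∞} (hF : Measurable F) :
    ∫⁻ x, (∏ i, w (x i)) * F x = ∫⁻ z : Fin k → E', (∏ i, v (z i)) * F fun i => T (z i) := by
  induction k with
  | zero =>
    simp only [Finset.univ_eq_empty, Finset.prod_empty, one_mul]
    rw [volume_pi, volume_pi, Measure.pi_of_empty, Measure.pi_of_empty, lintegral_dirac,
      lintegral_dirac]
    exact congrArg F (Subsingleton.elim _ _)
  | succ k ih =>
    rw [lintegral_prod_mul_vecCons hw hF, lintegral_prod_mul_vecCons hv (by fun_prop),
      h _ (by fun_prop)]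
    refine lintegral_congr fun z₀ => ?_
    rw [ih (F := fun xs => F (Matrix.vecCons (T z₀) xs)) (by fun_prop)]
    congr! with zs i
    refine Fin.cases ?_ (fun j => ?_) i <;> simp

lemma lintegral_prod_mul_eq_of_forall_lintegral_fst {X Y E : Type*} [MeasureSpace X]
    [SigmaFinite (volume : Measure X)] [MeasureSpace Y] [SigmaFinite (volume : Measure Y)]
    [MeasureSpace E] [SigmaFinite (volume : Measure E)] {k : ℕ} {T : X × Y → E} (hT : Measurable T)
    {w : E → ℝ≥0∞} (hw : Measurable w) {v : X × Y → ℝ≥0∞} (hv : Measurable v) {u : Y → ℝ≥0∞}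
    (hu : Measurable u) {a : X → ℝ≥0∞} (ha : Measurable a)
    (hTw : ∀ G : E → ℝ≥0∞, Measurable G → ∫⁻ x, w x * G x = ∫⁻ z, v z * G (T z))
    (hvu : ∀ y, ∫⁻ s, v (s, y) * a s = u y) {F : (Fin k → E) → ℝ≥0∞} (hF : Measurable F)
    {G : (Fin k → Y) → ℝ≥0∞} (hG : Measurable G)
    (hFG : ∀ z : Fin k → X × Y, (F fun i => T (z i)) = (∏ i, a (z i).1) * G fun i => (z i).2) :
    ∫⁻ x, (∏ i, w (x i)) * F x = ∫⁻ y, (∏ i, u (y i)) * G y := by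
  have hsnd (H : Y → ℝ≥0∞) (hH : Measurable H) :
      ∫⁻ y, u y * H y = ∫⁻ z : X × Y, v z * a z.1 * H z.2 := by
    rw [Measure.volume_eq_prod, lintegral_prod_symm _ (by fun_prop)]
    refine lintegral_congr fun y => ?_
    rw [← hvu, ← lintegral_mul_const _ (by fun_prop)]
  rw [lintegral_prod_mul_comp hT hw hv hTw hF,
    lintegral_prod_mul_comp measurable_snd hu (by fun_prop) hsnd hG]
  refine lintegral_congr fun z => ?_
  rw [hFG, Finset.prod_mul_distrib, mul_assoc]

end ProductMeasure

section LinearChange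

variable {m : ℕ}

lemma enorm_det_mul_lintegral_comp_mulVec {M : Matrix (Fin m) (Fin m) ℝ} (hM : M.det ≠ 0)
    {F : (Fin m → ℝ) → ℝ≥0∞} (hF : Measurable F) :
    ‖M.det‖ₑ * ∫⁻ x, F (M.mulVec x) = ∫⁻ x, F x := by
  have hm : Measurable (Matrix.toLin' M) :=
    (LinearMap.continuous_of_finiteDimensional _).measurable
  have h := lintegral_map (μ := volume) hF hm
  rw [Real.map_matrix_volume_pi_eq_smul_volume_pi hM, lintegral_smul_measure, smul_eq_mul] at h
  simp only [Matrix.toLin'_apply] at h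
  rw [← h, ← mul_assoc, Real.enorm_eq_ofReal_abs, ← ENNReal.ofReal_mul (abs_nonneg _), ← abs_mul,
    mul_inv_cancel₀ hM, abs_one, ENNReal.ofReal_one, one_mul]

lemma enorm_pow_mul_lintegral_comp_smul {r : ℝ} (hr : r ≠ 0) {F : (Fin m → ℝ) → ℝ≥0∞}
    (hF : Measurable F) : ‖r‖ₑ ^ m * ∫⁻ x, F (r • x) = ∫⁻ x, F x := by
  have hdet : (r • (1 : Matrix (Fin m) (Fin m) ℝ)).det = r ^ m := by
    rw [Matrix.det_smul, Fintype.card_fin, Matrix.det_one, mul_one]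
  have h := enorm_det_mul_lintegral_comp_mulVec (by rw [hdet]; exact pow_ne_zero m hr) hF
  simpa only [hdet, enorm_pow, Matrix.smul_mulVec, Matrix.one_mulVec] using h

@[fun_prop]
lemma measurable_enorm_det {α : Type*} [MeasurableSpace α] {f : α → Fin m → Fin m → ℝ}
    (hf : Measurable f) : Measurable fun a => ‖(Matrix.of (f a)).det‖ₑ := by
  simp only [Matrix.det_apply, Matrix.of_apply]
  fun_prop

lemma enorm_det_of_smul (r : Fin m → ℝ) (x : Fin m → Fin m → ℝ) :
    ‖(Matrix.of fun i => r i • x i).det‖ₑ = (∏ i, ‖r i‖ₑ) * ‖(Matrix.of x).det‖ₑ := by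
  have h : (Matrix.of fun i => r i • x i).det = (∏ i, r i) * (Matrix.of x).det :=
    Matrix.det_mul_column r (Matrix.of x)
  rw [h, enorm_mul]
  simp only [enorm_eq_nnnorm, nnnorm_prod, ENNReal.ofNNReal_finsetProd]

/-- The moment `∫ |det(x₁, …, x_m)| ∏ w(x_i) dx₁ ⋯ dx_m` of the volume of the random simplex
spanned by the origin and `m` points of `ℝ^m` distributed with density `w`. -/
def detIntegral (w : (Fin m → ℝ) → ℝ≥0∞) : ℝ≥0∞ :=
  ∫⁻ x : Fin m → Fin m → ℝ, (∏ i, w (x i)) * ‖(Matrix.of x).det‖ₑ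

lemma detIntegral_mono {w w' : (Fin m → ℝ) → ℝ≥0∞} (h : w ≤ w') :
    detIntegral w ≤ detIntegral w' :=
  lintegral_mono fun x => mul_le_mul_left (Finset.prod_le_prod' fun i _ => h (x i)) _

lemma prod_indicator_mul_eq_indicator_pi {ι E : Type*} [Fintype ι] (K : ι → Set E)
    (F : (ι → E) → ℝ≥0∞) (x : ι → E) :
    (∏ i, (K i).indicator 1 (x i)) * F x = (Set.univ.pi K).indicator F x := by
  classical
  by_cases h : x ∈ Set.univ.pi K
  · rw [Set.indicator_of_mem h, Finset.prod_eq_one fun i _ => Set.indicator_of_mem (h i trivial) 1,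
      one_mul]
  · obtain ⟨i, hi⟩ := not_forall.1 (mt Set.mem_univ_pi.2 h)
    rw [Set.indicator_of_notMem h,
      Finset.prod_eq_zero (Finset.mem_univ i) (Set.indicator_of_notMem hi 1), zero_mul]

lemma detIntegral_indicator {K : Set (Fin m → ℝ)} (hK : MeasurableSet K) :
    detIntegral (K.indicator 1) =
      ∫⁻ x in Set.univ.pi fun _ : Fin m => K, ‖(Matrix.of x).det‖ₑ := by
  rw [← lintegral_indicator (MeasurableSet.univ_pi fun _ => hK)]
  exact lintegral_congr fun x => prod_indicator_mul_eq_indicator_pi _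
    (fun x => ‖(Matrix.of x).det‖ₑ) x

lemma detIntegral_comp_mulVec {M : Matrix (Fin m) (Fin m) ℝ} (hM : M.det ≠ 0)
    {w : (Fin m → ℝ) → ℝ≥0∞} (hw : Measurable w) :
    ‖M.det‖ₑ ^ (m + 1) * detIntegral (fun x => w (M.mulVec x)) = detIntegral w := by
  have hMm : Measurable M.mulVec := M.mulVecLin.continuous_of_finiteDimensional.measurable
  have hchange : ∀ G : (Fin m → ℝ) → ℝ≥0∞, Measurable G →
      ∫⁻ x, w x * G x = ∫⁻ z, ‖M.det‖ₑ * w (M.mulVec z) * G (M.mulVec z) := fun G hG => by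
    rw [← enorm_det_mul_lintegral_comp_mulVec hM (F := fun x => w x * G x) (by fun_prop),
      ← lintegral_const_mul _ (by fun_prop)]
    simp only [mul_assoc]
  have hdet (z : Fin m → Fin m → ℝ) :
      ‖(Matrix.of fun i => M.mulVec (z i)).det‖ₑ = ‖M.det‖ₑ * ‖(Matrix.of z).det‖ₑ := by
    have hmul : Matrix.of (fun i => M.mulVec (z i)) = Matrix.of z * M.transpose := by
      ext i j
      simp only [Matrix.of_apply, Matrix.mul_apply, Matrix.mulVec, dotProduct,
        Matrix.transpose_apply, mul_comm]
    rw [hmul, Matrix.det_mul, Matrix.det_transpose, enorm_mul, mul_comm]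
  rw [detIntegral, detIntegral, lintegral_prod_mul_comp hMm hw (by fun_prop) hchange
    (by fun_prop), ← lintegral_const_mul _ (by fun_prop)]
  refine lintegral_congr fun z => ?_
  rw [hdet, Finset.prod_mul_distrib, Finset.prod_const, Finset.card_univ, Fintype.card_fin]
  ring

end LinearChange

section Steiner

variable {d : ℕ} {K L : Set (Fin (d + 1) → ℝ)}

/-- The slice of `K` by the line parallel to the first coordinate axis over `y`. -/
def slice (K : Set (Fin (d + 1) → ℝ)) (y : Fin d → ℝ) : Set ℝ :=
  {s | Matrix.vecCons s y ∈ K}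

lemma measurableSet_slice (hK : MeasurableSet K) (y : Fin d → ℝ) : MeasurableSet (slice K y) :=
  measurable_vecCons measurable_id measurable_const hK

lemma measurable_volume_slice (hK : MeasurableSet K) : Measurable fun y => volume (slice K y) :=
  measurable_measure_prodMk_right ((measurePreserving_vecCons d).measurable hK)

lemma volume_eq_lintegral_slice (hK : MeasurableSet K) : volume K = ∫⁻ y, volume (slice K y) := by
  rw [← (measurePreserving_vecCons d).measure_preimage hK.nullMeasurableSet,
    Measure.volume_eq_prod,
    Measure.prod_apply_symm ((measurePreserving_vecCons d).measurable hK)]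
  rfl

/-- The Steiner symmetrization of `K` in the direction of the first coordinate axis. -/
def steiner (K : Set (Fin (d + 1) → ℝ)) : Set (Fin (d + 1) → ℝ) :=
  {x | x 0 ∈ symmRearr (slice K (Matrix.vecTail x))}

lemma slice_steiner (K : Set (Fin (d + 1) → ℝ)) (y : Fin d → ℝ) :
    slice (steiner K) y = symmRearr (slice K y) := by
  simp only [slice, steiner, Set.mem_ofPred_eq, Matrix.cons_val_zero, Matrix.tail_cons,
    Set.ofPred_mem_eq]

lemma measurableSet_steiner (hK : MeasurableSet K) : MeasurableSet (steiner K) := by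
  have h : Measurable fun x : Fin (d + 1) → ℝ =>
      volume.real (slice K (Matrix.vecTail x)) / 2 :=
    (((measurable_volume_slice hK).comp (by fun_prop)).ennreal_toReal).div_const 2
  exact (measurableSet_lt h.neg (measurable_pi_apply 0)).inter
    (measurableSet_lt (measurable_pi_apply 0) h)

lemma volume_steiner (hK : MeasurableSet K) (hfin : ∀ y, volume (slice K y) ≠ ∞) :
    volume (steiner K) = volume K := by
  rw [volume_eq_lintegral_slice hK, volume_eq_lintegral_slice (measurableSet_steiner hK)]
  simp only [slice_steiner, volume_symmRearr (hfin _)]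

lemma steiner_mono (hfin : ∀ y, volume (slice L y) ≠ ∞) (h : K ⊆ L) : steiner K ⊆ steiner L := by
  intro x hx
  have hle : volume.real (slice K (Matrix.vecTail x)) ≤ volume.real (slice L (Matrix.vecTail x)) :=
    measureReal_mono (fun _ hs => h hs) (hfin _)
  exact Set.Ioo_subset_Ioo (by linarith) (by linarith) hx

lemma detIntegral_indicator_eq_lintegral_slice (hK : MeasurableSet K) :
    detIntegral (K.indicator 1) = ∫⁻ y : Fin (d + 1) → Fin d → ℝ,
      ∫⁻ s, ‖(Matrix.of fun i => Matrix.vecCons (s i) (y i)).det‖ₑ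
        ∂Measure.pi fun i => (volume : Measure ℝ).restrict (slice K (y i)) := by
  have hpi : MeasurableSet (Set.univ.pi fun _ : Fin (d + 1) => K) :=
    MeasurableSet.univ_pi fun _ => hK
  have hmp : MeasurePreserving fun (p : (Fin (d + 1) → ℝ) × (Fin (d + 1) → Fin d → ℝ)) i =>
      Matrix.vecCons (p.1 i) (p.2 i) :=
    (measurePreserving_pi (fun _ => volume) (fun _ => volume)
      fun _ => measurePreserving_vecCons d).comp
      (volume_measurePreserving_arrowProdEquivProdArrow ℝ (Fin d → ℝ) (Fin (d + 1))).symm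
  have hF : Measurable ((Set.univ.pi fun _ : Fin (d + 1) => K).indicator
      fun x : Fin (d + 1) → Fin (d + 1) → ℝ => ‖(Matrix.of x).det‖ₑ) :=
    Measurable.indicator (by fun_prop) hpi
  rw [detIntegral_indicator hK, ← lintegral_indicator hpi, ← hmp.lintegral_comp hF,
    Measure.volume_eq_prod]
  refine (lintegral_prod_symm' _ (hF.comp hmp.measurable)).trans ?_
  refine lintegral_congr fun y => ?_
  rw [← Measure.restrict_pi_pi,
    ← lintegral_indicator (MeasurableSet.univ_pi fun i => measurableSet_slice hK (y i)),
    ← volume_pi]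
  rfl

lemma detIntegral_steiner_le (hK : MeasurableSet K) (hfin : ∀ y, volume (slice K y) ≠ ∞) :
    detIntegral ((steiner K).indicator 1) ≤ detIntegral (K.indicator 1) := by
  rw [detIntegral_indicator_eq_lintegral_slice hK,
    detIntegral_indicator_eq_lintegral_slice (measurableSet_steiner hK)]
  refine lintegral_mono fun y => ?_
  have hdet (s : Fin (d + 1) → ℝ) : (Matrix.of fun i => Matrix.vecCons (s i) (y i)).det =
      ∑ i : Fin (d + 1), (-1) ^ (i : ℕ) *
        (Matrix.of fun k => y (i.succAbove k)).det * s i := by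
    rw [Matrix.det_succ_column_zero]
    refine Finset.sum_congr rfl fun i _ => ?_
    rw [mul_right_comm]
    rfl
  simp only [slice_steiner, hdet]
  exact lintegral_enorm_sum_symmRearr_le (fun i => measurableSet_slice hK (y i))
    (fun i => hfin (y i)) _

lemma volume_sdiff_symmRearr_add_le {I S : Set ℝ} (hI : MeasurableSet I) (hIfin : volume I ≠ ∞)
    (hsymm : symmRearr I = I) (hS : MeasurableSet S) (hSfin : volume S ≠ ∞) {h : ℝ≥0∞}
    (hSI : h ≤ volume (S \ I)) (hIS : h ≤ volume (I \ S)) :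
    volume (I \ symmRearr S) + h ≤ volume (I \ S) := by
  have hdiff : volume (I \ symmRearr S) ≤ volume I - volume S := by
    rcases le_total (volume.real I) (volume.real S) with hle | hle
    · have hsub : I ⊆ symmRearr S := by
        rw [← hsymm]
        exact Set.Ioo_subset_Ioo (by linarith) (by linarith)
      simp only [Set.sdiff_eq_empty.2 hsub, measure_empty, zero_le]
    · have hsub : symmRearr S ⊆ I := by
        rw [← hsymm]
        exact Set.Ioo_subset_Ioo (by linarith) (by linarith)
      rw [measure_sdiff hsub (measurableSet_symmRearr S).nullMeasurableSet
        (volume_symmRearr hSfin ▸ hSfin), volume_symmRearr hSfin]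
  calc volume (I \ symmRearr S) + h
      ≤ (volume (I ∩ S) + volume (I \ S)) - (volume (S ∩ I) + volume (S \ I)) + h := by
        rw [measure_inter_add_sdiff I hS, measure_inter_add_sdiff S hI]
        gcongr
    _ ≤ (volume (I \ S) - h) + h := by
        rw [Set.inter_comm S I, ENNReal.add_sub_add_eq_sub_left
          (measure_ne_top_of_subset Set.inter_subset_left hIfin)]
        gcongr
    _ = volume (I \ S) := tsub_add_cancel_of_le hIS

end Steiner

section SphereArea

variable {d : ℕ}

lemma sphereArea_eq (d : ℕ) :
    sphereArea d = 2 * √π ^ (d + 1) / Gamma (((d : ℝ) + 1) / 2) := by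
  rw [sphereArea, Real.sqrt_eq_rpow, ← Real.rpow_mul_natCast pi_pos.le]
  congr 3
  push_cast
  ring

lemma sphereArea_pos (d : ℕ) : 0 < sphereArea d :=
  div_pos (by positivity) (Gamma_pos_of_pos (by positivity))

lemma volume_ball_eq_sphereArea (x : EuclideanSpace ℝ (Fin (d + 1))) (r : ℝ) :
    volume (ball x r) =
      ENNReal.ofReal r ^ (d + 1) * ENNReal.ofReal (sphereArea d / (d + 1)) := by
  have hΓ : Gamma (((d : ℝ) + 1) / 2) ≠ 0 := (Gamma_pos_of_pos (by positivity)).ne'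
  rw [EuclideanSpace.volume_ball, Fintype.card_fin, Nat.cast_add_one,
    Gamma_add_one (by positivity), sphereArea_eq]
  congr 2
  field_simp

end SphereArea

section Ball

/-- The open Euclidean ball of radius `r` in coordinates, where the ambient type `Fin m → ℝ`
carries the sup norm. -/
def euclBall (m : ℕ) (r : ℝ) : Set (Fin m → ℝ) :=
  {x | ∑ i, x i ^ 2 < r ^ 2}

variable {m d : ℕ} {r : ℝ}

lemma measurableSet_euclBall (m : ℕ) (r : ℝ) : MeasurableSet (euclBall m r) :=
  measurableSet_lt (by fun_prop) measurable_const

lemma abs_le_of_mem_euclBall (hr : 0 ≤ r) {x : Fin m → ℝ} (hx : x ∈ euclBall m r) (i : Fin m) :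
    |x i| ≤ r := by
  refine abs_le_of_sq_le_sq (le_trans ?_ (le_of_lt hx)) hr
  exact Finset.single_le_sum (f := fun i => x i ^ 2) (fun i _ => sq_nonneg _) (Finset.mem_univ i)

lemma euclBall_mono {R : ℝ} (hr : 0 ≤ r) (h : r ≤ R) : euclBall m r ⊆ euclBall m R :=
  fun _ hx => lt_of_lt_of_le hx (pow_le_pow_left₀ hr h 2)

lemma euclBall_eq_preimage_ball (hr : 0 ≤ r) :
    euclBall m r = WithLp.toLp 2 ⁻¹' ball (0 : EuclideanSpace ℝ (Fin m)) r := by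
  rw [EuclideanSpace.ball_zero_eq r hr]
  rfl

lemma volume_euclBall (hr : 0 ≤ r) : volume (euclBall (d + 1) r) =
    ENNReal.ofReal r ^ (d + 1) * ENNReal.ofReal (sphereArea d / (d + 1)) := by
  rw [euclBall_eq_preimage_ball hr, (PiLp.volume_preserving_toLp (Fin (d + 1))).measure_preimage
    measurableSet_ball.nullMeasurableSet, volume_ball_eq_sphereArea]

lemma slice_euclBall (r : ℝ) (y : Fin d → ℝ) :
    slice (euclBall (d + 1) r) y = Set.Ioo (-√(r ^ 2 - ∑ i, y i ^ 2)) √(r ^ 2 - ∑ i, y i ^ 2) := by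
  ext s
  simp only [slice, euclBall, Set.mem_ofPred_eq, Fin.sum_univ_succ, Matrix.cons_val_zero,
    Matrix.cons_val_succ, Set.mem_Ioo, ← Real.sq_lt, lt_sub_iff_add_lt]

lemma symmRearr_slice_euclBall (r : ℝ) (y : Fin d → ℝ) :
    symmRearr (slice (euclBall (d + 1) r) y) = slice (euclBall (d + 1) r) y := by
  have h : 0 ≤ √(r ^ 2 - ∑ i, y i ^ 2) := Real.sqrt_nonneg _
  rw [slice_euclBall, symmRearr, Real.volume_real_Ioo_of_le (by linarith), sub_neg_eq_add,
    add_self_div_two]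

lemma volume_slice_ne_top {K : Set (Fin (d + 1) → ℝ)} (h : K ⊆ euclBall (d + 1) r)
    (y : Fin d → ℝ) : volume (slice K y) ≠ ∞ := by
  refine measure_ne_top_of_subset (s := slice (euclBall (d + 1) r) y) (fun _ hs => @h _ hs) ?_
  rw [slice_euclBall, Real.volume_Ioo]
  exact ENNReal.ofReal_ne_top

lemma steiner_subset_euclBall {K : Set (Fin (d + 1) → ℝ)} (h : K ⊆ euclBall (d + 1) r) :
    steiner K ⊆ euclBall (d + 1) r := by
  refine (steiner_mono (volume_slice_ne_top (r := r) subset_rfl) h).trans fun x hx => ?_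
  rw [steiner, Set.mem_ofPred_eq, symmRearr_slice_euclBall] at hx
  rw [← Matrix.cons_head_tail x]
  exact hx

lemma volume_euclBall_sdiff_steiner_add_le {K : Set (Fin (d + 1) → ℝ)} (hK : MeasurableSet K)
    (hfin : ∀ y, volume (slice K y) ≠ ∞) (r l : ℝ) :
    volume (euclBall (d + 1) r \ steiner K) + volume ((K \ euclBall (d + 1) r) ∩
      (· + Matrix.vecCons l 0) ⁻¹' (euclBall (d + 1) r \ K)) ≤ volume (euclBall (d + 1) r \ K) := by
  have hB := measurableSet_euclBall (d + 1) r
  have hBK := hB.diff hK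
  have hBS := hB.diff (measurableSet_steiner hK)
  rw [volume_eq_lintegral_slice hBS, volume_eq_lintegral_slice hBK,
    volume_eq_lintegral_slice ((hK.diff hB).inter ((measurable_add_const _) hBK)),
    ← lintegral_add_left (measurable_volume_slice hBS)]
  refine lintegral_mono fun y => ?_
  have hslice : slice (euclBall (d + 1) r \ steiner K) y =
      slice (euclBall (d + 1) r) y \ symmRearr (slice K y) := by
    rw [← slice_steiner]
    rfl
  rw [hslice]
  refine volume_sdiff_symmRearr_add_le (measurableSet_slice hB y)
    (volume_slice_ne_top subset_rfl y) (symmRearr_slice_euclBall r y) (measurableSet_slice hK y)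
    (hfin y) (measure_mono fun s hs => hs.1) ?_
  rw [← measure_preimage_add_right volume l (slice (euclBall (d + 1) r) y \ slice K y)]
  refine measure_mono fun s hs => ?_
  have hshift : Matrix.vecCons s y + Matrix.vecCons l 0 = Matrix.vecCons (s + l) y := by
    rw [Matrix.cons_add_cons, add_zero]
  have hs' := hs.2
  rwa [Set.mem_preimage, hshift] at hs'

lemma volume_euclBall_ne_top (hr : 0 ≤ r) : volume (euclBall (d + 1) r) ≠ ∞ := by
  rw [volume_euclBall hr]
  exact ENNReal.mul_ne_top (ENNReal.pow_ne_top ENNReal.ofReal_ne_top) ENNReal.ofReal_ne_top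

lemma volume_euclBall_ne_zero (hr : 0 < r) : volume (euclBall (d + 1) r) ≠ 0 := by
  rw [volume_euclBall hr.le]
  exact mul_ne_zero (pow_ne_zero _ (ENNReal.ofReal_pos.2 hr).ne')
    (ENNReal.ofReal_pos.2 (div_pos (sphereArea_pos d) (by positivity))).ne'

section Orthogonal

variable {M : Matrix (Fin m) (Fin m) ℝ}

lemma exists_mem_orthogonalGroup_mulVec_eq (w : Fin (d + 1) → ℝ) :
    ∃ M ∈ Matrix.orthogonalGroup (Fin (d + 1)) ℝ,
      M.mulVec (Matrix.vecCons √(∑ i, w i ^ 2) 0) = w := by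
  set e : Fin (d + 1) → ℝ := Matrix.vecCons √(∑ i, w i ^ 2) 0
  have hnorm : ‖WithLp.toLp 2 e‖ = ‖WithLp.toLp 2 w‖ := by
    simp [EuclideanSpace.norm_eq, e, Fin.sum_univ_succ]
  set T : EuclideanSpace ℝ (Fin (d + 1)) ≃ₗᵢ[ℝ] EuclideanSpace ℝ (Fin (d + 1)) :=
    (ℝ ∙ (WithLp.toLp 2 e - WithLp.toLp 2 w))ᗮ.reflection
  set b := EuclideanSpace.basisFun (Fin (d + 1)) ℝ
  refine ⟨_, T.toMatrix_mem_unitaryGroup b b, ?_⟩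
  have h := LinearMap.toMatrix_mulVec_repr b.toBasis b.toBasis T.toLinearMap (WithLp.toLp 2 e)
  have hT : T (WithLp.toLp 2 e) = WithLp.toLp 2 w := Submodule.reflection_sub hnorm
  exact h.trans (congrArg (fun x : EuclideanSpace ℝ (Fin (d + 1)) => x.ofLp) hT)

lemma sum_sq_mulVec (hM : M ∈ Matrix.orthogonalGroup (Fin m) ℝ) (x : Fin m → ℝ) :
    ∑ i, M.mulVec x i ^ 2 = ∑ i, x i ^ 2 := by
  have hsq (y : Fin m → ℝ) : ∑ i, y i ^ 2 = y ⬝ᵥ y := by simp only [dotProduct, sq]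
  have hMM : M.transpose * M = 1 := (Matrix.mem_orthogonalGroup_iff' _ _).1 hM
  rw [hsq, hsq, Matrix.dotProduct_mulVec, Matrix.vecMul_mulVec, hMM, Matrix.vecMul_one]

lemma enorm_det_of_mem_orthogonalGroup (hM : M ∈ Matrix.orthogonalGroup (Fin m) ℝ) :
    ‖M.det‖ₑ = 1 := by
  rw [← ofReal_norm, CStarRing.norm_of_mem_unitary (Matrix.det_of_mem_unitary hM),
    ENNReal.ofReal_one]

lemma measurePreserving_mulVec (hM : M ∈ Matrix.orthogonalGroup (Fin m) ℝ) :
    MeasurePreserving fun x : Fin m → ℝ => M.mulVec x := by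
  have hdet := enorm_det_of_mem_orthogonalGroup hM
  have hmeas : Measurable M.mulVec := M.mulVecLin.continuous_of_finiteDimensional.measurable
  refine ⟨hmeas, Measure.ext fun s hs => ?_⟩
  have h := enorm_det_mul_lintegral_comp_mulVec (M := M) (by rw [← enorm_ne_zero, hdet]; simp)
    (F := s.indicator 1) (measurable_one.indicator hs)
  rw [hdet, one_mul, lintegral_indicator_one hs] at h
  rw [Measure.map_apply hmeas hs, ← h, ← lintegral_indicator_one (hmeas hs)]
  rfl

lemma detIntegral_comp_mulVec_of_mem_orthogonalGroup (hM : M ∈ Matrix.orthogonalGroup (Fin m) ℝ)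
    {w : (Fin m → ℝ) → ℝ≥0∞} (hw : Measurable w) :
    detIntegral (fun x => w (M.mulVec x)) = detIntegral w := by
  have hdet := enorm_det_of_mem_orthogonalGroup hM
  have h := detIntegral_comp_mulVec (M := M) (by rw [← enorm_ne_zero, hdet]; simp) hw
  rwa [hdet, one_pow, one_mul] at h

lemma preimage_mulVec_euclBall (hM : M ∈ Matrix.orthogonalGroup (Fin m) ℝ) (r : ℝ) :
    M.mulVec ⁻¹' euclBall m r = euclBall m r :=
  Set.ext fun x => by
    simp only [euclBall, Set.mem_preimage, Set.mem_ofPred_eq, sum_sq_mulVec hM]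

lemma volume_preimage_mulVec_inter (hM : M ∈ Matrix.orthogonalGroup (Fin m) ℝ)
    {X Y : Set (Fin m → ℝ)} (hX : MeasurableSet X) (hY : MeasurableSet Y) (e : Fin m → ℝ) :
    volume (M.mulVec ⁻¹' X ∩ (· + e) ⁻¹' (M.mulVec ⁻¹' Y)) =
      volume (X ∩ (· + M.mulVec e) ⁻¹' Y) := by
  rw [← (measurePreserving_mulVec hM).measure_preimage
    (hX.inter (measurable_add_const _ hY)).nullMeasurableSet, Set.preimage_inter]
  congr 2
  ext x
  simp only [Set.mem_preimage, Matrix.mulVec_add]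

end Orthogonal

lemma lintegral_volume_inter_preimage_add {X Y : Set (Fin m → ℝ)} (hX : MeasurableSet X)
    (hY : MeasurableSet Y) : ∫⁻ w, volume (X ∩ (· + w) ⁻¹' Y) = volume X * volume Y := by
  calc ∫⁻ w, volume (X ∩ (· + w) ⁻¹' Y)
      = ∫⁻ w, ∫⁻ x, X.indicator 1 x * Y.indicator 1 (x + w) :=
        lintegral_congr fun w => by
          rw [← lintegral_indicator_one (hX.inter (measurable_add_const w hY)),
            Set.inter_indicator_one]
          rfl
    _ = ∫⁻ x, ∫⁻ w, X.indicator 1 x * Y.indicator 1 (x + w) :=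
        lintegral_lintegral_swap (((measurable_one.indicator hX).comp measurable_snd).mul
          ((measurable_one.indicator hY).comp (measurable_snd.add measurable_fst))).aemeasurable
    _ = ∫⁻ x, X.indicator 1 x * volume Y := lintegral_congr fun x => by
        rw [lintegral_const_mul (f := fun w => Y.indicator 1 (x + w)) _
          ((measurable_one.indicator hY).comp (measurable_const_add x)),
          lintegral_add_left_eq_self (Y.indicator 1) x, lintegral_indicator_one hY]
    _ = volume X * volume Y := by
        rw [lintegral_mul_const _ (measurable_one.indicator hX), lintegral_indicator_one hX]

lemma mem_euclBall_of_add_mem {R : ℝ} {x w : Fin m → ℝ} (hx : x ∈ euclBall m R)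
    (hxw : x + w ∈ euclBall m R) : w ∈ euclBall m (2 * R) := by
  have hle : ∑ i, w i ^ 2 ≤ ∑ i, (2 * (x i + w i) ^ 2 + 2 * x i ^ 2) :=
    Finset.sum_le_sum fun i _ => by nlinarith [sq_nonneg (x i + w i + x i)]
  rw [Finset.sum_add_distrib, ← Finset.mul_sum, ← Finset.mul_sum] at hle
  simp only [euclBall, Set.mem_ofPred_eq, Pi.add_apply] at hx hxw ⊢
  linarith

lemma exists_volume_inter_preimage_add_ge {X Y : Set (Fin (d + 1) → ℝ)} (hX : MeasurableSet X)
    (hY : MeasurableSet Y) {R : ℝ} (hR : 0 < R) (hXR : X ⊆ euclBall (d + 1) R)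
    (hYR : Y ⊆ euclBall (d + 1) R) :
    ∃ w, volume X * volume Y / volume (euclBall (d + 1) (2 * R)) ≤
      volume (X ∩ (· + w) ⁻¹' Y) := by
  have hset : ∫⁻ w in euclBall (d + 1) (2 * R), volume (X ∩ (· + w) ⁻¹' Y) =
      volume X * volume Y := by
    rw [← lintegral_volume_inter_preimage_add hX hY]
    refine setLIntegral_eq_of_support_subset fun w hw => ?_
    obtain ⟨x, hx, hxw⟩ := nonempty_of_measure_ne_zero hw
    exact mem_euclBall_of_add_mem (hXR hx) (hYR hxw)
  have hfin : volume X * volume Y ≠ ∞ :=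
    ENNReal.mul_ne_top (measure_ne_top_of_subset hXR (volume_euclBall_ne_top hR.le))
      (measure_ne_top_of_subset hYR (volume_euclBall_ne_top hR.le))
  obtain ⟨w, -, hw⟩ := exists_setLAverage_le (f := fun w => volume (X ∩ (· + w) ⁻¹' Y))
    (volume_euclBall_ne_zero (mul_pos two_pos hR))
    (measurableSet_euclBall (d + 1) (2 * R)).nullMeasurableSet (by rwa [hset])
  rw [setLAverage_eq, hset] at hw
  exact ⟨w, hw⟩

/-- `IsCompetitor R K K'` says that `K'` may replace `K` in the minimization of the determinant
integral among the subsets of the ball of radius `R` with the volume of `K`. -/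
structure IsCompetitor (R : ℝ) (K K' : Set (Fin (d + 1) → ℝ)) : Prop where
  measurableSet : MeasurableSet K'
  subset_euclBall : K' ⊆ euclBall (d + 1) R
  volume_eq : volume K' = volume K
  detIntegral_le : detIntegral (K'.indicator 1) ≤ detIntegral (K.indicator 1)

section Symmetrization

variable {R : ℝ} {K : Set (Fin (d + 1) → ℝ)}

lemma isCompetitor_steiner_preimage (hK : MeasurableSet K) (hKR : K ⊆ euclBall (d + 1) R)
    {M : Matrix (Fin (d + 1)) (Fin (d + 1)) ℝ}
    (hM : M ∈ Matrix.orthogonalGroup (Fin (d + 1)) ℝ) :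
    IsCompetitor R K (steiner (M.mulVec ⁻¹' K)) := by
  have hmp := measurePreserving_mulVec hM
  have hMK : MeasurableSet (M.mulVec ⁻¹' K) := hmp.measurable hK
  have hMKR : M.mulVec ⁻¹' K ⊆ euclBall (d + 1) R :=
    (Set.preimage_mono hKR).trans_eq (preimage_mulVec_euclBall hM R)
  refine ⟨measurableSet_steiner hMK, steiner_subset_euclBall hMKR, ?_, ?_⟩
  · rw [volume_steiner hMK (volume_slice_ne_top hMKR), hmp.measure_preimage hK.nullMeasurableSet]
  · rw [← detIntegral_comp_mulVec_of_mem_orthogonalGroup hM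
      (measurable_one.indicator hK : Measurable (K.indicator (1 : (Fin (d + 1) → ℝ) → ℝ≥0∞)))]
    exact detIntegral_steiner_le hMK (volume_slice_ne_top hMKR)

lemma volume_sdiff_eq_of_volume_eq {B : Set (Fin (d + 1) → ℝ)} (hK : MeasurableSet K)
    (hB : MeasurableSet B) (hfin : volume B ≠ ∞) (hv : volume K = volume B) :
    volume (K \ B) = volume (B \ K) := by
  have h := measure_inter_add_sdiff (μ := volume) K hB
  rw [hv, ← measure_inter_add_sdiff (μ := volume) B hK, Set.inter_comm B K] at h
  exact (ENNReal.add_right_inj (measure_ne_top_of_subset Set.inter_subset_right hfin)).1 h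

-- Averaging `volume ((K \ B) ∩ ((B \ K) - w))` over `w` yields a translation `w` along which
-- `K \ B` substantially meets `B \ K`; symmetrizing in the direction of `w` lets the former fill
-- the latter.
lemma exists_isCompetitor_volume_sdiff_add_le {r : ℝ} (hr : 0 < r) (hrR : r ≤ R)
    (hK : MeasurableSet K) (hKR : K ⊆ euclBall (d + 1) R)
    (hv : volume K = volume (euclBall (d + 1) r)) :
    ∃ K', IsCompetitor R K K' ∧ volume (euclBall (d + 1) r \ K') +
      volume (euclBall (d + 1) r \ K) ^ 2 / volume (euclBall (d + 1) (2 * R)) ≤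
        volume (euclBall (d + 1) r \ K) := by
  set B := euclBall (d + 1) r
  have hB : MeasurableSet B := measurableSet_euclBall _ _
  obtain ⟨w, hw⟩ := exists_volume_inter_preimage_add_ge (hK.diff hB) (hB.diff hK)
    (hr.trans_le hrR) (Set.sdiff_subset.trans hKR)
    (Set.sdiff_subset.trans (euclBall_mono hr.le hrR))
  rw [volume_sdiff_eq_of_volume_eq hK hB (volume_euclBall_ne_top hr.le) hv, ← sq] at hw
  obtain ⟨M, hM, hMw⟩ := exists_mem_orthogonalGroup_mulVec_eq w
  have hmp := measurePreserving_mulVec hM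
  have hMB : M.mulVec ⁻¹' B = B := preimage_mulVec_euclBall hM r
  have hMKR : M.mulVec ⁻¹' K ⊆ euclBall (d + 1) R :=
    (Set.preimage_mono hKR).trans_eq (preimage_mulVec_euclBall hM R)
  have hgain := volume_euclBall_sdiff_steiner_add_le (hmp.measurable hK)
    (volume_slice_ne_top hMKR) r √(∑ i, w i ^ 2)
  refine ⟨_, isCompetitor_steiner_preimage hK hKR hM, ?_⟩
  calc volume (B \ steiner (M.mulVec ⁻¹' K)) +
        volume (B \ K) ^ 2 / volume (euclBall (d + 1) (2 * R))
      ≤ volume (B \ steiner (M.mulVec ⁻¹' K)) + volume ((K \ B) ∩ (· + w) ⁻¹' (B \ K)) := by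
        gcongr
    _ = volume (B \ steiner (M.mulVec ⁻¹' K)) + volume ((M.mulVec ⁻¹' K \ B) ∩
          (· + Matrix.vecCons √(∑ i, w i ^ 2) 0) ⁻¹' (B \ M.mulVec ⁻¹' K)) := by
        rw [← hMw, ← volume_preimage_mulVec_inter hM (hK.diff hB) (hB.diff hK), hMw,
          Set.preimage_sdiff, Set.preimage_sdiff, hMB]
    _ ≤ volume (B \ M.mulVec ⁻¹' K) := hgain
    _ = volume (B \ K) := by
        rw [← hmp.measure_preimage (hB.diff hK).nullMeasurableSet, Set.preimage_sdiff, hMB]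

lemma exists_isCompetitor_volume_sdiff_lt {r : ℝ} (hr : 0 < r) (hrR : r ≤ R)
    (hK : MeasurableSet K) (hKR : K ⊆ euclBall (d + 1) R)
    (hv : volume K = volume (euclBall (d + 1) r)) {ε : ℝ≥0∞} (hε : 0 < ε) :
    ∃ K', IsCompetitor R K K' ∧ volume (euclBall (d + 1) r \ K') < ε := by
  set B := euclBall (d + 1) r
  set α := sInf {v | ∃ K', IsCompetitor R K K' ∧ v = volume (B \ K')}
  have hlow : ∀ K', IsCompetitor R K K' → α ≤ volume (B \ K') := fun K' h => sInf_le ⟨K', h, rfl⟩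
  suffices hα : α = 0 by
    obtain ⟨_, ⟨K', hK', rfl⟩, hlt⟩ := sInf_lt_iff.1 (hα.trans_lt hε)
    exact ⟨K', hK', hlt⟩
  by_contra hne
  have hαfin : α ≠ ∞ := ne_top_of_le_ne_top (volume_euclBall_ne_top hr.le)
    ((hlow K ⟨hK, hKR, rfl, le_rfl⟩).trans (measure_mono Set.sdiff_subset))
  have hgain : α ^ 2 / volume (euclBall (d + 1) (2 * R)) ≠ 0 :=
    ENNReal.div_ne_zero.2 ⟨pow_ne_zero 2 hne, volume_euclBall_ne_top (by linarith)⟩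
  obtain ⟨_, ⟨K₁, hK₁, rfl⟩, hlt⟩ := sInf_lt_iff.1 (ENNReal.lt_add_right hαfin hgain)
  obtain ⟨K₂, hK₂, hle⟩ := exists_isCompetitor_volume_sdiff_add_le hr hrR hK₁.measurableSet
    hK₁.subset_euclBall (hK₁.volume_eq.trans hv)
  have hK₂' : IsCompetitor R K K₂ := ⟨hK₂.measurableSet, hK₂.subset_euclBall,
    hK₂.volume_eq.trans hK₁.volume_eq, hK₂.detIntegral_le.trans hK₁.detIntegral_le⟩
  refine hlt.not_ge (le_trans ?_ hle)
  gcongr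
  exacts [hlow K₂ hK₂', hlow K₁ hK₁]

lemma enorm_det_le_of_forall_mem_euclBall (hr : 0 ≤ r) {x : Fin m → Fin m → ℝ}
    (hx : ∀ i, x i ∈ euclBall m r) :
    ‖(Matrix.of x).det‖ₑ ≤ ENNReal.ofReal (m.factorial * r ^ m) := by
  rw [Real.enorm_eq_ofReal_abs]
  refine ENNReal.ofReal_le_ofReal ?_
  simpa only [nsmul_eq_mul, Fintype.card_fin] using! Matrix.det_le (A := Matrix.of x)
    (abv := AbsoluteValue.abs) (x := r) fun i j => abs_le_of_mem_euclBall hr (hx i) j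

lemma setLIntegral_pi_enorm_det_le (hr : 0 ≤ r) {S : Fin m → Set (Fin m → ℝ)}
    (hS : ∀ i, S i ⊆ euclBall m r) :
    ∫⁻ x in Set.univ.pi S, ‖(Matrix.of x).det‖ₑ ≤
      ENNReal.ofReal (m.factorial * r ^ m) * ∏ i, volume (S i) := by
  rw [← volume_pi_pi, ← setLIntegral_const]
  exact setLIntegral_mono measurable_const fun x hx =>
    enorm_det_le_of_forall_mem_euclBall hr fun i => hS i (hx i trivial)

lemma detIntegral_euclBall_ne_top (hr : 0 ≤ r) :
    detIntegral ((euclBall (d + 1) r).indicator 1) ≠ ∞ := by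
  rw [detIntegral_indicator (measurableSet_euclBall _ r)]
  exact ne_top_of_le_ne_top (ENNReal.mul_ne_top ENNReal.ofReal_ne_top
    (ENNReal.prod_ne_top fun _ _ => volume_euclBall_ne_top hr))
    (setLIntegral_pi_enorm_det_le hr fun _ => subset_rfl)

lemma univ_pi_subset_union_iUnion_update {ι E : Type*} [DecidableEq ι] (B K : Set E) :
    (Set.univ.pi fun _ : ι => B) ⊆ (Set.univ.pi fun _ : ι => K) ∪
      ⋃ i, Set.univ.pi (Function.update (fun _ : ι => B) i (B \ K)) := by
  intro x hx
  refine or_iff_not_imp_left.2 fun hxK => ?_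
  obtain ⟨i, hi⟩ := not_forall.1 (mt Set.mem_univ_pi.2 hxK)
  refine Set.mem_iUnion.2 ⟨i, fun j hj => ?_⟩
  rcases eq_or_ne j i with rfl | hji
  · rw [Function.update_self]
    exact ⟨hx j hj, hi⟩
  · rw [Function.update_of_ne hji]
    exact hx j hj

lemma detIntegral_euclBall_le_add (hr : 0 ≤ r) (hK : MeasurableSet K) :
    detIntegral ((euclBall (d + 1) r).indicator 1) ≤ detIntegral (K.indicator 1) +
      (d + 1) * ENNReal.ofReal ((d + 1).factorial * r ^ (d + 1)) *
        volume (euclBall (d + 1) r) ^ d * volume (euclBall (d + 1) r \ K) := by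
  set B := euclBall (d + 1) r
  set D := ENNReal.ofReal ((d + 1).factorial * r ^ (d + 1))
  have hE (i) : ∫⁻ x in Set.univ.pi (Function.update (fun _ : Fin (d + 1) => B) i (B \ K)),
      ‖(Matrix.of x).det‖ₑ ≤ D * (volume B ^ d * volume (B \ K)) := by
    refine (setLIntegral_pi_enorm_det_le hr fun j => (update_le_iff (x := fun _ => B)
      (y := fun _ => B)).2 ⟨Set.sdiff_subset, fun _ _ => le_rfl⟩ j).trans_eq ?_
    rw [← Finset.mul_prod_erase _ _ (Finset.mem_univ i), Function.update_self,
      Finset.prod_congr rfl fun j hj => by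
        rw [Function.update_of_ne (Finset.ne_of_mem_erase hj)],
      Finset.prod_const, Finset.card_erase_of_mem (Finset.mem_univ i), Finset.card_fin,
      Nat.add_sub_cancel, mul_comm (volume (B \ K))]
  rw [detIntegral_indicator (measurableSet_euclBall _ r), detIntegral_indicator hK]
  refine (lintegral_mono_set (univ_pi_subset_union_iUnion_update B K)).trans
    ((lintegral_union_le _ _ _).trans ?_)
  gcongr
  refine (lintegral_iUnion_le _ _).trans ?_
  rw [tsum_fintype]
  refine (Finset.sum_le_sum fun i _ => hE i).trans_eq ?_
  rw [Finset.sum_const, nsmul_eq_mul, Finset.card_fin]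
  push_cast
  ring

lemma detIntegral_euclBall_le_of_volume_eq {r : ℝ} (hr : 0 < r) (hrR : r ≤ R)
    (hK : MeasurableSet K) (hKR : K ⊆ euclBall (d + 1) R)
    (hv : volume K = volume (euclBall (d + 1) r)) :
    detIntegral ((euclBall (d + 1) r).indicator 1) ≤ detIntegral (K.indicator 1) := by
  set C : ℝ≥0∞ := (d + 1) * ENNReal.ofReal ((d + 1).factorial * r ^ (d + 1)) *
    volume (euclBall (d + 1) r) ^ d
  have hC : C ≠ ∞ := ENNReal.mul_ne_top (by finiteness)
    (ENNReal.pow_ne_top (volume_euclBall_ne_top hr.le))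
  refine ENNReal.le_of_forall_pos_le_add fun ε hε _ => ?_
  obtain ⟨K', hK', hlt⟩ := exists_isCompetitor_volume_sdiff_lt hr hrR hK hKR hv
    (ENNReal.div_pos (ENNReal.coe_ne_zero.2 hε.ne') hC)
  calc detIntegral ((euclBall (d + 1) r).indicator 1)
      ≤ detIntegral (K'.indicator 1) + C * volume (euclBall (d + 1) r \ K') :=
        detIntegral_euclBall_le_add hr.le hK'.measurableSet
    _ ≤ detIntegral (K.indicator 1) + C * (ε / C) := by
        gcongr
        exact hK'.detIntegral_le
    _ ≤ detIntegral (K.indicator 1) + ε := by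
        gcongr
        exact ENNReal.mul_div_le

lemma detIntegral_euclBall (hr : 0 < r) : detIntegral ((euclBall m r).indicator 1) =
    ENNReal.ofReal r ^ (m * (m + 1)) * detIntegral ((euclBall m 1).indicator 1) := by
  have hdet : (r • (1 : Matrix (Fin m) (Fin m) ℝ)).det = r ^ m := by
    rw [Matrix.det_smul, Fintype.card_fin, Matrix.det_one, mul_one]
  have hscale (x : Fin m → ℝ) : (euclBall m r).indicator (1 : (Fin m → ℝ) → ℝ≥0∞) (r • x) =
      (euclBall m 1).indicator 1 x := by
    refine Set.indicator_eq_indicator ?_ rfl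
    simp only [euclBall, Set.mem_ofPred_eq, Pi.smul_apply, smul_eq_mul, mul_pow, ← Finset.mul_sum,
      one_pow, mul_lt_iff_lt_one_right (pow_pos hr 2)]
  rw [← detIntegral_comp_mulVec (M := r • 1) (by rw [hdet]; exact pow_ne_zero m hr.ne')
    (measurable_one.indicator (measurableSet_euclBall m r))]
  simp only [hdet, Matrix.smul_mulVec, Matrix.one_mulVec, hscale, enorm_pow,
    Real.enorm_eq_ofReal hr.le, ← pow_mul]

lemma exists_volume_euclBall_eq {v : ℝ≥0∞} (h₀ : v ≠ 0) (h : v ≠ ∞) (d : ℕ) :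
    ∃ r, 0 < r ∧ volume (euclBall (d + 1) r) = v := by
  set κ := volume (euclBall (d + 1) 1) with hκ
  have hκ₀ : κ ≠ 0 := volume_euclBall_ne_zero one_pos
  have hκfin : κ ≠ ∞ := volume_euclBall_ne_top zero_le_one
  have hquot : v / κ ≠ ∞ := ENNReal.div_ne_top h hκ₀
  have hpos : 0 < (v / κ).toReal := ENNReal.toReal_pos (ENNReal.div_ne_zero.2 ⟨h₀, hκfin⟩) hquot
  refine ⟨(v / κ).toReal ^ ((d + 1 : ℕ) : ℝ)⁻¹, Real.rpow_pos_of_pos hpos _, ?_⟩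
  rw [volume_euclBall (by positivity), ← ENNReal.ofReal_pow (by positivity),
    Real.rpow_inv_natCast_pow hpos.le (by simp), ENNReal.ofReal_toReal hquot]
  rw [volume_euclBall zero_le_one, ENNReal.ofReal_one, one_pow, one_mul] at hκ
  rw [← hκ, ENNReal.div_mul_cancel hκ₀ hκfin]

lemma detIntegral_euclBall_mul_volume_pow_le_of_subset (hK : MeasurableSet K)
    (hKR : K ⊆ euclBall (d + 1) R) (hR : 0 ≤ R) :
    detIntegral ((euclBall (d + 1) 1).indicator 1) * volume K ^ (d + 2) ≤
      volume (euclBall (d + 1) 1) ^ (d + 2) * detIntegral (K.indicator 1) := by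
  rcases eq_or_ne (volume K) 0 with h₀ | h₀
  · rw [h₀, zero_pow (by simp), mul_zero]
    exact zero_le
  obtain ⟨r, hr, hv⟩ := exists_volume_euclBall_eq h₀
    (measure_ne_top_of_subset hKR (volume_euclBall_ne_top hR)) d
  have hle := detIntegral_euclBall_le_of_volume_eq hr (le_max_right R r) hK
    (hKR.trans (euclBall_mono hR (le_max_left R r))) hv.symm
  calc detIntegral ((euclBall (d + 1) 1).indicator 1) * volume K ^ (d + 2)
      = volume (euclBall (d + 1) 1) ^ (d + 2) *
          detIntegral ((euclBall (d + 1) r).indicator 1) := by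
        rw [detIntegral_euclBall hr, ← hv, volume_euclBall hr.le, volume_euclBall zero_le_one,
          ENNReal.ofReal_one]
        ring
    _ ≤ _ := by gcongr

theorem detIntegral_euclBall_mul_volume_pow_le (hK : MeasurableSet K) :
    detIntegral ((euclBall (d + 1) 1).indicator 1) * volume K ^ (d + 2) ≤
      volume (euclBall (d + 1) 1) ^ (d + 2) * detIntegral (K.indicator 1) := by
  have hmono : Monotone fun k : ℕ => K ∩ euclBall (d + 1) k := fun a b hab =>
    Set.inter_subset_inter_right K (euclBall_mono (Nat.cast_nonneg a) (Nat.cast_le.2 hab))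
  have hunion : ⋃ k : ℕ, K ∩ euclBall (d + 1) k = K := by
    rw [← Set.inter_iUnion, Set.inter_eq_left]
    intro x _
    obtain ⟨k, hk⟩ := exists_nat_gt √(∑ i, x i ^ 2)
    exact Set.mem_iUnion.2 ⟨k, (Real.sqrt_lt' ((Real.sqrt_nonneg _).trans_lt hk)).1 hk⟩
  have htend := tendsto_measure_iUnion_atTop (μ := volume) hmono
  rw [hunion] at htend
  refine le_of_tendsto' (ENNReal.Tendsto.const_mul
    ((ENNReal.continuous_pow (d + 2)).continuousAt.tendsto.comp htend)
    (Or.inr (detIntegral_euclBall_ne_top zero_le_one))) fun k => ?_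
  refine (detIntegral_euclBall_mul_volume_pow_le_of_subset
    (hK.inter (measurableSet_euclBall _ _)) Set.inter_subset_right (Nat.cast_nonneg k)).trans ?_
  gcongr
  exact detIntegral_mono (Set.indicator_le_indicator_of_subset Set.inter_subset_left
    fun _ => zero_le)

end Symmetrization

end Ball

section Gaussian

lemma setLIntegral_Ioi_mul_exp_neg_sq {a : ℝ} (ha : 0 ≤ a) :
    ∫⁻ r in Set.Ioi a, ENNReal.ofReal (2 * r * exp (-r ^ 2)) = ENNReal.ofReal (exp (-a ^ 2)) := by
  have hderiv : ∀ r ∈ Set.Ici a,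
      HasDerivAt (fun r => -exp (-r ^ 2)) (2 * r * exp (-r ^ 2)) r := fun r _ => by
    refine (hasDerivAt_pow 2 r).neg.exp.neg.congr_deriv ?_
    simp only [Pi.neg_apply, Nat.cast_ofNat, Nat.add_one_sub_one, pow_one]
    ring
  have hpos : ∀ r ∈ Set.Ioi a, 0 ≤ 2 * r * exp (-r ^ 2) := fun r hr => by
    have : 0 < r := ha.trans_lt hr
    positivity
  have hlim : Filter.Tendsto (fun r : ℝ => -exp (-r ^ 2)) Filter.atTop (nhds (-0)) :=
    (tendsto_exp_neg_atTop_nhds_zero.comp (Filter.tendsto_pow_atTop two_ne_zero)).neg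
  rw [← ofReal_integral_eq_lintegral_ofReal (integrableOn_Ioi_deriv_of_nonneg' hderiv hpos hlim)
      ((ae_restrict_iff' measurableSet_Ioi).2 (Filter.Eventually.of_forall hpos)),
    integral_Ioi_of_hasDerivAt_of_nonneg' hderiv hpos hlim, neg_zero, zero_sub, neg_neg]

lemma lintegral_mul_exp_neg_sq_mul_pow (q : ℕ) :
    ∫⁻ r : ℝ, ENNReal.ofReal (2 * r * exp (-r ^ 2)) * ‖r‖ₑ ^ q =
      ENNReal.ofReal (Gamma ((q : ℝ) / 2 + 1)) := by
  have hq : (-1 : ℝ) < (q : ℝ) + 1 := by linarith [q.cast_nonneg (α := ℝ)]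
  have hpos : ∀ r ∈ Set.Ioi (0 : ℝ), 0 ≤ 2 * (r ^ ((q : ℝ) + 1) * exp (-r ^ (2 : ℝ))) :=
    fun r hr => mul_nonneg zero_le_two (mul_nonneg (rpow_nonneg hr.le _) (exp_pos _).le)
  have hzero : ∀ r ∉ Set.Ioi (0 : ℝ), ENNReal.ofReal (2 * r * exp (-r ^ 2)) * ‖r‖ₑ ^ q = 0 :=
    fun r hr => by
      rw [ENNReal.ofReal_of_nonpos, zero_mul]
      exact mul_nonpos_of_nonpos_of_nonneg (by linarith [Set.notMem_Ioi.1 hr]) (exp_pos _).le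
  calc ∫⁻ r : ℝ, ENNReal.ofReal (2 * r * exp (-r ^ 2)) * ‖r‖ₑ ^ q
      = ∫⁻ r in Set.Ioi (0 : ℝ), ENNReal.ofReal (2 * r * exp (-r ^ 2)) * ‖r‖ₑ ^ q :=
        (setLIntegral_eq_of_support_subset (Function.support_subset_iff'.2 hzero)).symm
    _ = ∫⁻ r in Set.Ioi (0 : ℝ),
          ENNReal.ofReal (2 * (r ^ ((q : ℝ) + 1) * exp (-r ^ (2 : ℝ)))) := by
        refine setLIntegral_congr_fun measurableSet_Ioi fun r (hr : 0 < r) => ?_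
        rw [Real.enorm_eq_ofReal hr.le, ← ENNReal.ofReal_pow hr.le,
          ← ENNReal.ofReal_mul (by positivity), rpow_add_one hr.ne', rpow_natCast, rpow_two]
        ring_nf
    _ = ENNReal.ofReal (Gamma ((q : ℝ) / 2 + 1)) := by
        rw [← ofReal_integral_eq_lintegral_ofReal
            ((integrableOn_rpow_mul_exp_neg_rpow hq two_pos).const_mul 2)
            ((ae_restrict_iff' measurableSet_Ioi).2 (Filter.Eventually.of_forall hpos)),
          integral_const_mul, integral_rpow_mul_exp_neg_rpow two_pos hq]
        ring_nf

/-- The Gaussian weight `e^{-|x|²}`, whose determinant moment can be computed in closed form. -/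
def gaussianWeight {m : ℕ} (x : Fin m → ℝ) : ℝ≥0∞ :=
  ENNReal.ofReal (exp (-∑ i, x i ^ 2))

variable {m d : ℕ}

@[fun_prop]
lemma measurable_gaussianWeight : Measurable (gaussianWeight (m := m)) := by
  unfold gaussianWeight
  fun_prop

lemma gaussianWeight_vecCons (s : ℝ) (y : Fin d → ℝ) :
    gaussianWeight (Matrix.vecCons s y) = ENNReal.ofReal (exp (-s ^ 2)) * gaussianWeight y := by
  rw [gaussianWeight, gaussianWeight, ← ENNReal.ofReal_mul (exp_pos _).le, ← exp_add,
    Fin.sum_univ_succ, neg_add]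
  rfl

lemma gaussianWeight_mulVec {M : Matrix (Fin m) (Fin m) ℝ}
    (hM : M ∈ Matrix.orthogonalGroup (Fin m) ℝ) (x : Fin m → ℝ) :
    gaussianWeight (M.mulVec x) = gaussianWeight x := by
  rw [gaussianWeight, gaussianWeight, sum_sq_mulVec hM]

lemma gaussianWeight_eq_lintegral (x : Fin m → ℝ) :
    gaussianWeight x =
      ∫⁻ r : ℝ, ENNReal.ofReal (2 * r * exp (-r ^ 2)) * (euclBall m r).indicator 1 x := by
  have hsum : 0 ≤ ∑ i, x i ^ 2 := Finset.sum_nonneg fun i _ => sq_nonneg _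
  have h := setLIntegral_Ioi_mul_exp_neg_sq (Real.sqrt_nonneg (∑ i, x i ^ 2))
  rw [Real.sq_sqrt hsum, ← lintegral_indicator measurableSet_Ioi] at h
  rw [gaussianWeight, ← h]
  refine lintegral_congr fun r => ?_
  rcases le_or_gt r 0 with hr | hr
  · have hr' : r ∉ Set.Ioi √(∑ i, x i ^ 2) := fun h => (h.trans_le hr).not_ge (Real.sqrt_nonneg _)
    rw [Set.indicator_of_notMem hr', ENNReal.ofReal_of_nonpos, zero_mul]
    exact mul_nonpos_of_nonpos_of_nonneg (by linarith) (exp_pos _).le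
  · have hmem : r ∈ Set.Ioi √(∑ i, x i ^ 2) ↔ x ∈ euclBall m r := Real.sqrt_lt' hr
    by_cases hx : x ∈ euclBall m r <;> simp [hmem, hx]

lemma lintegral_indicator_euclBall_mul {r : ℝ} (hr : r ≠ 0) {G : (Fin m → ℝ) → ℝ≥0∞}
    (hG : Measurable G) : ∫⁻ x, (euclBall m r).indicator 1 x * G x =
      ‖r‖ₑ ^ m * ∫⁻ x, (euclBall m 1).indicator 1 x * G (r • x) := by
  have hB : Measurable ((euclBall m r).indicator (1 : (Fin m → ℝ) → ℝ≥0∞)) :=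
    measurable_one.indicator (measurableSet_euclBall m r)
  have hmem (x : Fin m → ℝ) : r • x ∈ euclBall m r ↔ x ∈ euclBall m 1 := by
    simp only [euclBall, Set.mem_ofPred_eq, Pi.smul_apply, smul_eq_mul, mul_pow, ← Finset.mul_sum]
    rw [mul_lt_iff_lt_one_right (by positivity), one_pow]
  rw [← enorm_pow_mul_lintegral_comp_smul hr (F := fun x => (euclBall m r).indicator 1 x * G x)
    (by fun_prop)]
  congr! 3 with x
  by_cases hx : x ∈ euclBall m 1 <;> simp [hmem, hx]

lemma lintegral_gaussianWeight_mul {G : (Fin m → ℝ) → ℝ≥0∞} (hG : Measurable G) :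
    ∫⁻ x, gaussianWeight x * G x =
      ∫⁻ z : ℝ × (Fin m → ℝ), ENNReal.ofReal (2 * z.1 * exp (-z.1 ^ 2)) * ‖z.1‖ₑ ^ m *
        (euclBall m 1).indicator 1 z.2 * G (z.1 • z.2) := by
  have hB (r : ℝ) : Measurable ((euclBall m r).indicator (1 : (Fin m → ℝ) → ℝ≥0∞)) :=
    measurable_one.indicator (measurableSet_euclBall m r)
  have hBall : Measurable fun p : (Fin m → ℝ) × ℝ =>
      (euclBall m p.2).indicator (1 : (Fin m → ℝ) → ℝ≥0∞) p.1 :=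
    measurable_one.indicator (s := {p : (Fin m → ℝ) × ℝ | ∑ i, p.1 i ^ 2 < p.2 ^ 2})
      (measurableSet_lt (by fun_prop) (by fun_prop))
  calc ∫⁻ x, gaussianWeight x * G x
      = ∫⁻ x, ∫⁻ r, ENNReal.ofReal (2 * r * exp (-r ^ 2)) * (euclBall m r).indicator 1 x * G x := by
        refine lintegral_congr fun x => ?_
        have hx : Measurable fun r => (euclBall m r).indicator (1 : (Fin m → ℝ) → ℝ≥0∞) x :=
          hBall.comp measurable_prodMk_left
        rw [gaussianWeight_eq_lintegral, lintegral_mul_const _ (by fun_prop)]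
    _ = ∫⁻ r, ENNReal.ofReal (2 * r * exp (-r ^ 2)) *
          ∫⁻ x, (euclBall m r).indicator 1 x * G x := by
        rw [lintegral_lintegral_swap (by fun_prop)]
        simp only [mul_assoc]
        exact lintegral_congr fun r => lintegral_const_mul _ ((hB r).mul hG)
    _ = ∫⁻ r, ∫⁻ x, ENNReal.ofReal (2 * r * exp (-r ^ 2)) * ‖r‖ₑ ^ m *
          (euclBall m 1).indicator 1 x * G (r • x) := by
        refine lintegral_congr fun r => ?_
        rcases eq_or_ne r 0 with rfl | hr
        · simp
        · rw [lintegral_indicator_euclBall_mul hr hG, ← lintegral_const_mul _ (by fun_prop),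
            ← lintegral_const_mul _ (by fun_prop)]
          simp only [mul_assoc]
    _ = _ := by rw [Measure.volume_eq_prod, lintegral_prod _ (by fun_prop)]

lemma detIntegral_gaussianWeight_eq_mul (m : ℕ) : detIntegral (gaussianWeight (m := m)) =
    ENNReal.ofReal (Gamma (((m : ℝ) + 1) / 2 + 1)) ^ m *
      detIntegral ((euclBall m 1).indicator 1) := by
  have hB : Measurable ((euclBall m 1).indicator (1 : (Fin m → ℝ) → ℝ≥0∞)) :=
    measurable_one.indicator (measurableSet_euclBall m 1)
  have hradial (x : Fin m → ℝ) : ∫⁻ r : ℝ, ENNReal.ofReal (2 * r * exp (-r ^ 2)) * ‖r‖ₑ ^ m *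
      (euclBall m 1).indicator 1 x * ‖r‖ₑ =
        ENNReal.ofReal (Gamma (((m : ℝ) + 1) / 2 + 1)) * (euclBall m 1).indicator 1 x := by
    rw [← Nat.cast_add_one, ← lintegral_mul_exp_neg_sq_mul_pow,
      ← lintegral_mul_const _ (by fun_prop)]
    exact lintegral_congr fun r => by ring
  rw [detIntegral, lintegral_prod_mul_eq_of_forall_lintegral_fst (by fun_prop)
    measurable_gaussianWeight (by fun_prop) (by fun_prop)
    measurable_enorm (fun G hG => lintegral_gaussianWeight_mul hG) hradial (by fun_prop)
    (G := fun y => ‖(Matrix.of y).det‖ₑ) (by fun_prop), detIntegral,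
    ← lintegral_const_mul _ (by fun_prop)]
  · refine lintegral_congr fun x => ?_
    rw [Finset.prod_mul_distrib, Finset.prod_const, Finset.card_univ, Fintype.card_fin, mul_assoc]
  · exact fun z => enorm_det_of_smul _ _

lemma lintegral_exp_neg_sq : ∫⁻ s : ℝ, ENNReal.ofReal (exp (-s ^ 2)) = ENNReal.ofReal √π := by
  have hint := integrable_exp_neg_mul_sq one_pos
  have hval := integral_gaussian 1
  simp only [neg_mul, one_mul, div_one] at hint hval
  rw [← ofReal_integral_eq_lintegral_ofReal hint (ae_of_all _ fun s => (exp_pos _).le), hval]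

lemma lintegral_gaussianWeight_mul_sqrt (d : ℕ) :
    ∫⁻ x : Fin (d + 1) → ℝ, gaussianWeight x * ENNReal.ofReal √(∑ i, x i ^ 2) =
      ENNReal.ofReal (sphereArea d * Gamma ((d : ℝ) / 2 + 1) / 2) := by
  have hd : (-1 : ℝ) < (d : ℝ) + 1 := by linarith [d.cast_nonneg (α := ℝ)]
  have hpow : ∀ r ∈ Set.Ioi (0 : ℝ),
      r ^ d * (r * exp (-r ^ 2)) = r ^ ((d : ℝ) + 1) * exp (-r ^ (2 : ℝ)) := fun r hr => by
    rw [rpow_add_one (ne_of_gt hr), rpow_natCast, rpow_two, mul_assoc]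
  have hint : Integrable fun x : EuclideanSpace ℝ (Fin (d + 1)) => ‖x‖ * exp (-‖x‖ ^ 2) := by
    rw [integrable_fun_norm_addHaar volume (f := fun r => r * exp (-r ^ 2)),
      finrank_euclideanSpace_fin, Nat.add_sub_cancel]
    exact (integrableOn_rpow_mul_exp_neg_rpow hd two_pos).congr_fun
      (fun r hr => (hpow r hr).symm) measurableSet_Ioi
  have hball : volume.real (ball (0 : EuclideanSpace ℝ (Fin (d + 1))) 1) =
      sphereArea d / (d + 1) := by
    rw [measureReal_def, volume_ball_eq_sphereArea, ENNReal.ofReal_one, one_pow, one_mul,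
      ENNReal.toReal_ofReal (div_nonneg (sphereArea_pos d).le (by positivity))]
  calc ∫⁻ x : Fin (d + 1) → ℝ, gaussianWeight x * ENNReal.ofReal √(∑ i, x i ^ 2)
      = ∫⁻ x : EuclideanSpace ℝ (Fin (d + 1)), ENNReal.ofReal (‖x‖ * exp (-‖x‖ ^ 2)) := by
        rw [← (PiLp.volume_preserving_ofLp (Fin (d + 1))).lintegral_comp (by fun_prop)]
        refine lintegral_congr fun x => ?_
        rw [gaussianWeight, ← ENNReal.ofReal_mul (exp_pos _).le, ← EuclideanSpace.real_norm_sq_eq,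
          Real.sqrt_sq (norm_nonneg x), mul_comm]
    _ = ENNReal.ofReal (sphereArea d * Gamma ((d : ℝ) / 2 + 1) / 2) := by
        rw [← ofReal_integral_eq_lintegral_ofReal hint
            (ae_of_all _ fun x => mul_nonneg (norm_nonneg x) (exp_pos _).le),
          integral_fun_norm_addHaar volume fun r => r * exp (-r ^ 2), hball]
        simp only [finrank_euclideanSpace_fin, Nat.add_sub_cancel, smul_eq_mul, nsmul_eq_mul]
        rw [setIntegral_congr_fun measurableSet_Ioi hpow,
          integral_rpow_mul_exp_neg_rpow two_pos hd, Nat.cast_add_one]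
        field_simp
        ring_nf

lemma det_of_vecCons_vecCons_zero (l : ℝ) (z : Fin d → Fin (d + 1) → ℝ) :
    (Matrix.of (Matrix.vecCons (Matrix.vecCons l 0) z)).det =
      l * (Matrix.of fun i => Matrix.vecTail (z i)).det := by
  rw [Matrix.det_succ_row_zero, Fin.sum_univ_succ, Finset.sum_eq_zero fun j _ => by
    rw [show Matrix.of (Matrix.vecCons (Matrix.vecCons l 0) z) 0 j.succ = 0 from rfl, mul_zero,
      zero_mul], add_zero, Fin.val_zero, pow_zero, one_mul]
  rfl

lemma enorm_det_of_vecCons_mulVec {M : Matrix (Fin (d + 1)) (Fin (d + 1)) ℝ}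
    (hM : M ∈ Matrix.orthogonalGroup (Fin (d + 1)) ℝ) (l : ℝ) (z : Fin d → Fin (d + 1) → ℝ) :
    ‖(Matrix.of (Matrix.vecCons (M.mulVec (Matrix.vecCons l 0)) fun i => M.mulVec (z i))).det‖ₑ =
      ‖l‖ₑ * ‖(Matrix.of fun i => Matrix.vecTail (z i)).det‖ₑ := by
  have hmul : Matrix.of (Matrix.vecCons (M.mulVec (Matrix.vecCons l 0)) fun i => M.mulVec (z i)) =
      Matrix.of (Matrix.vecCons (Matrix.vecCons l 0) z) * M.transpose := by
    ext i j
    rw [Matrix.mul_apply_eq_vecMul, Matrix.vecMul_transpose]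
    refine Fin.cases rfl (fun _ => rfl) i
  rw [hmul, Matrix.det_mul, Matrix.det_transpose, enorm_mul, enorm_det_of_mem_orthogonalGroup hM,
    mul_one, det_of_vecCons_vecCons_zero, enorm_mul]

lemma lintegral_prod_gaussianWeight_mul_enorm_det_vecCons (x₀ : Fin (d + 1) → ℝ) :
    ∫⁻ xs : Fin d → Fin (d + 1) → ℝ,
        (∏ i, gaussianWeight (xs i)) * ‖(Matrix.of (Matrix.vecCons x₀ xs)).det‖ₑ =
      ENNReal.ofReal √(∑ i, x₀ i ^ 2) *
        (ENNReal.ofReal √π ^ d * detIntegral (gaussianWeight (m := d))) := by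
  obtain ⟨M, hM, hx₀⟩ := exists_mem_orthogonalGroup_mulVec_eq x₀
  set l := √(∑ i, x₀ i ^ 2)
  have hrot : MeasurePreserving fun (z : Fin d → Fin (d + 1) → ℝ) i => M.mulVec (z i) :=
    volume_preserving_pi fun _ => measurePreserving_mulVec hM
  have hsplit (G : (Fin (d + 1) → ℝ) → ℝ≥0∞) (hG : Measurable G) : ∫⁻ x, gaussianWeight x * G x =
      ∫⁻ p : ℝ × (Fin d → ℝ), ENNReal.ofReal (exp (-p.1 ^ 2)) * gaussianWeight p.2 *
        G (Matrix.vecCons p.1 p.2) := by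
    rw [← (measurePreserving_vecCons d).lintegral_comp (by fun_prop)]
    simp only [gaussianWeight_vecCons]
  have hfst (y : Fin d → ℝ) : ∫⁻ s : ℝ, ENNReal.ofReal (exp (-s ^ 2)) * gaussianWeight y * 1 =
      ENNReal.ofReal √π * gaussianWeight y := by
    simp only [mul_one]
    rw [lintegral_mul_const _ (by fun_prop), lintegral_exp_neg_sq]
  rw [← hrot.lintegral_comp (by fun_prop), ← hx₀]
  simp only [gaussianWeight_mulVec hM, enorm_det_of_vecCons_mulVec hM]
  rw [lintegral_prod_mul_eq_of_forall_lintegral_fst (T := fun p => Matrix.vecCons p.1 p.2)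
    (by fun_prop) measurable_gaussianWeight (by fun_prop) (by fun_prop) measurable_const hsplit hfst
    (by fun_prop) (G := fun y => ‖l‖ₑ * ‖(Matrix.of y).det‖ₑ) (by fun_prop)
    (by simp only [Matrix.tail_cons, Finset.prod_const_one, one_mul, implies_true]),
    detIntegral, Real.enorm_eq_ofReal (Real.sqrt_nonneg _), ← mul_assoc,
    ← lintegral_const_mul _ (by fun_prop)]
  refine lintegral_congr fun y => ?_
  rw [Finset.prod_mul_distrib, Finset.prod_const, Finset.card_univ, Fintype.card_fin]
  ring

lemma detIntegral_gaussianWeight_succ (d : ℕ) : detIntegral (gaussianWeight (m := d + 1)) =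
    ENNReal.ofReal (sphereArea d * Gamma ((d : ℝ) / 2 + 1) / 2) *
      (ENNReal.ofReal √π ^ d * detIntegral (gaussianWeight (m := d))) := by
  rw [detIntegral, lintegral_prod_mul_vecCons measurable_gaussianWeight (by fun_prop)]
  simp only [lintegral_prod_gaussianWeight_mul_enorm_det_vecCons, ← mul_assoc]
  rw [lintegral_mul_const _ (by fun_prop), lintegral_mul_const _ (by fun_prop),
    lintegral_gaussianWeight_mul_sqrt]

lemma sqrt_pi_mul_detIntegral_gaussianWeight (m : ℕ) :
    ENNReal.ofReal √π * detIntegral (gaussianWeight (m := m)) =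
      ENNReal.ofReal (√π ^ (m ^ 2) * Gamma (((m : ℝ) + 1) / 2)) := by
  induction m with
  | zero =>
    simp [detIntegral, gaussianWeight, volume_pi, Real.Gamma_one_half_eq, -one_div]
  | succ m ih =>
    have : 0 < Gamma ((m : ℝ) / 2 + 1) := Gamma_pos_of_pos (by positivity)
    have hσ := sphereArea_pos m
    rw [detIntegral_gaussianWeight_succ, mul_left_comm, mul_left_comm (ENNReal.ofReal √π), ih,
      ← ENNReal.ofReal_pow (by positivity), ← ENNReal.ofReal_mul (by positivity),
      ← ENNReal.ofReal_mul (by positivity), sphereArea_eq]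
    congr 1
    have harg : ((m + 1 : ℕ) + 1 : ℝ) / 2 = (m : ℝ) / 2 + 1 := by push_cast; ring
    rw [harg]
    field_simp
    ring

lemma detIntegral_euclBall_one (d : ℕ) :
    detIntegral ((euclBall (d + 1) 1).indicator 1) =
      ENNReal.ofReal ((2 / (d + 2)) ^ (d + 1) * (sphereArea (d + 1) / 2) ^ d) := by
  have h := sqrt_pi_mul_detIntegral_gaussianWeight (d + 1)
  have harg : (((d + 1 : ℕ) : ℝ) + 1) / 2 = ((d : ℝ) + 2) / 2 := by push_cast; ring
  rw [detIntegral_gaussianWeight_eq_mul, harg, Gamma_add_one (by positivity), ← mul_assoc] at h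
  rw [sphereArea_eq, harg]
  have hΓ : 0 < Gamma (((d : ℝ) + 2) / 2) := Gamma_pos_of_pos (by positivity)
  have hd : 0 < (d : ℝ) + 2 := by positivity
  generalize Gamma (((d : ℝ) + 2) / 2) = Γ at *
  generalize (d : ℝ) + 2 = a at *
  have hne : ENNReal.ofReal √π * ENNReal.ofReal (a / 2 * Γ) ^ (d + 1) ≠ 0 :=
    mul_ne_zero (ENNReal.ofReal_pos.2 (by positivity)).ne'
      (pow_ne_zero _ (ENNReal.ofReal_pos.2 (by positivity)).ne')
  rw [← ENNReal.mul_right_inj hne (by finiteness), h, ← ENNReal.ofReal_pow (by positivity),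
    ← ENNReal.ofReal_mul (by positivity), ← ENNReal.ofReal_mul (by positivity)]
  congr 1
  simp only [div_pow, mul_pow]
  field_simp
  ring

end Gaussian

section RadialPower

lemma setLIntegral_enorm_pow (p : ℕ) (R : ℝ≥0∞) :
    ∫⁻ r in {r : ℝ | ‖r‖ₑ < R}, ‖r‖ₑ ^ p = ENNReal.ofReal (2 / (p + 1)) * R ^ (p + 1) := by
  rcases eq_or_ne R ∞ with rfl | hR
  · rw [ENNReal.top_pow p.succ_ne_zero,
      ENNReal.mul_top (ENNReal.ofReal_pos.2 (by positivity)).ne']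
    refine top_unique ?_
    calc (∞ : ℝ≥0∞) = ∫⁻ _ in Set.Ioi (1 : ℝ), 1 := by rw [setLIntegral_one, volume_Ioi]
      _ ≤ ∫⁻ r in Set.Ioi (1 : ℝ), ‖r‖ₑ ^ p :=
        setLIntegral_mono (by fun_prop) fun _ hr => one_le_pow₀ <| by
          rw [Real.enorm_eq_ofReal (zero_lt_one.trans hr).le]
          exact ENNReal.one_le_ofReal.2 (le_of_lt hr)
      _ ≤ ∫⁻ r in {r : ℝ | ‖r‖ₑ < ∞}, ‖r‖ₑ ^ p := lintegral_mono_set fun _ _ => enorm_lt_top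
  · lift R to ℝ≥0 using hR
    have hR := R.coe_nonneg
    have hset : {r : ℝ | ‖r‖ₑ < R} = Set.Ioo (-R : ℝ) R := by
      ext r
      rw [Set.mem_ofPred_eq, enorm_eq_nnnorm, ENNReal.coe_lt_coe, ← NNReal.coe_lt_coe, coe_nnnorm,
        Real.norm_eq_abs, abs_lt, Set.mem_Ioo]
    have hhalf (a : ℝ) :
        ∫⁻ r in Set.uIoc 0 a, ‖r‖ₑ ^ p = ENNReal.ofReal (|a| ^ (p + 1) / (p + 1)) := by
      have h := integral_pow_abs_sub_uIoc (a := 0) (b := a) (n := p)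
      simp only [sub_zero] at h
      rw [← h, ofReal_integral_eq_lintegral_ofReal
        (((by fun_prop : Continuous fun r : ℝ => |r| ^ p).integrableOn_uIcc).mono_set
          Set.uIoc_subset_uIcc) (ae_of_all _ fun r => by positivity)]
      simp only [Real.enorm_eq_ofReal_abs, ENNReal.ofReal_pow (abs_nonneg _)]
    have hleft := hhalf (-R)
    have hright := hhalf R
    rw [abs_neg, Set.uIoc_of_ge (neg_nonpos.2 hR)] at hleft
    rw [Set.uIoc_of_le hR] at hright
    rw [hset, restrict_Ioo_eq_restrict_Ioc, ← Set.Ioc_union_Ioc_eq_Ioc (neg_nonpos.2 hR) hR,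
      lintegral_union measurableSet_Ioc (Set.Ioc_disjoint_Ioc_of_le le_rfl), hleft, hright,
      ← ENNReal.ofReal_add (by positivity) (by positivity), NNReal.abs_eq,
      ← ENNReal.ofReal_coe_nnreal, ← ENNReal.ofReal_pow hR, ← ENNReal.ofReal_mul (by positivity)]
    ring_nf

lemma lintegral_enorm_pow_mul_indicator (p : ℕ) {q : ℕ} (hq : q ≠ 0) (H : ℝ≥0∞) :
    ∫⁻ r : ℝ, ‖r‖ₑ ^ p * {r : ℝ | ‖r‖ₑ ^ q < H}.indicator 1 r =
      ENNReal.ofReal (2 / (p + 1)) * H ^ (((p : ℝ) + 1) / q) := by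
  have hq' : (0 : ℝ) < q := Nat.cast_pos.2 hq.bot_lt
  have hset : {r : ℝ | ‖r‖ₑ ^ q < H} = {r | ‖r‖ₑ < H ^ (q : ℝ)⁻¹} := by
    ext r
    rw [Set.mem_ofPred_eq, Set.mem_ofPred_eq, ENNReal.lt_rpow_inv_iff hq', ENNReal.rpow_natCast]
  have hpow : (H ^ (q : ℝ)⁻¹) ^ (p + 1) = H ^ (((p : ℝ) + 1) / q) := by
    rw [← ENNReal.rpow_natCast, ← ENNReal.rpow_mul, Nat.cast_add_one, inv_mul_eq_div]
  rw [hset, ← hpow, ← setLIntegral_enorm_pow,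
    ← lintegral_indicator (measurableSet_lt (by fun_prop) measurable_const)]
  refine lintegral_congr fun r => ?_
  by_cases hr : ‖r‖ₑ < H ^ (q : ℝ)⁻¹ <;> simp [hr]

lemma lintegral_eq_lintegral_smul_vecCons_one {d : ℕ} {F : (Fin (d + 1) → ℝ) → ℝ≥0∞}
    (hF : Measurable F) : ∫⁻ x, F x =
      ∫⁻ z : ℝ × (Fin d → ℝ), ‖z.1‖ₑ ^ d * F (z.1 • Matrix.vecCons 1 z.2) := by
  rw [lintegral_vecCons hF, Measure.volume_eq_prod, lintegral_prod _ (by fun_prop)]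
  refine lintegral_congr_ae ?_
  filter_upwards [Measure.ae_ne volume (0 : ℝ)] with r hr
  rw [lintegral_const_mul _ (by fun_prop), ← enorm_pow_mul_lintegral_comp_smul hr (by fun_prop)]
  simp only [Matrix.smul_cons, smul_eq_mul, mul_one]

end RadialPower

section ConeBody

variable {d : ℕ} {h : (Fin d → ℝ) → ℝ≥0∞}

/-- The body in `ℝ^{d+1}` that encodes a weight `h` on `ℝ^d`: in the direction `(1, y)` it extends
to the height `h(y)^{1/(d+2)}`, so that its volume and its determinant moment are integrals
of powers of `h`. -/
def coneBody (h : (Fin d → ℝ) → ℝ≥0∞) : Set (Fin (d + 1) → ℝ) :=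
  {x | ‖x 0‖ₑ ^ (d + 2) < h ((x 0)⁻¹ • Matrix.vecTail x)}

lemma measurableSet_coneBody (hh : Measurable h) : MeasurableSet (coneBody h) :=
  measurableSet_lt (by fun_prop) (by fun_prop)

lemma smul_vecCons_one_mem_coneBody {r : ℝ} (hr : r ≠ 0) (y : Fin d → ℝ) :
    r • Matrix.vecCons 1 y ∈ coneBody h ↔ ‖r‖ₑ ^ (d + 2) < h y := by
  rw [coneBody, Set.mem_ofPred_eq, Matrix.smul_cons, Matrix.cons_val_zero, Matrix.tail_cons,
    smul_eq_mul, mul_one, inv_smul_smul₀ hr]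

lemma lintegral_indicator_coneBody_mul (hh : Measurable h) {F : (Fin (d + 1) → ℝ) → ℝ≥0∞}
    (hF : Measurable F) : ∫⁻ x, (coneBody h).indicator 1 x * F x =
      ∫⁻ z : ℝ × (Fin d → ℝ), ‖z.1‖ₑ ^ d * {r : ℝ | ‖r‖ₑ ^ (d + 2) < h z.2}.indicator 1 z.1 *
        F (z.1 • Matrix.vecCons 1 z.2) := by
  have hK : Measurable ((coneBody h).indicator (1 : (Fin (d + 1) → ℝ) → ℝ≥0∞)) :=
    measurable_one.indicator (measurableSet_coneBody hh)
  rw [lintegral_eq_lintegral_smul_vecCons_one (by fun_prop)]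
  refine lintegral_congr_ae ?_
  filter_upwards [Measure.quasiMeasurePreserving_fst.ae (Measure.ae_ne volume (0 : ℝ))] with z hz
  have hmem := smul_vecCons_one_mem_coneBody (h := h) hz z.2
  rw [mul_assoc]
  by_cases hz' : ‖z.1‖ₑ ^ (d + 2) < h z.2 <;> simp [hmem, hz', -Matrix.smul_cons]

lemma measurable_indicator_enorm_pow_lt (hh : Measurable h) (q : ℕ) :
    Measurable fun z : ℝ × (Fin d → ℝ) =>
      {r : ℝ | ‖r‖ₑ ^ q < h z.2}.indicator (1 : ℝ → ℝ≥0∞) z.1 :=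
  measurable_one.indicator (s := {z : ℝ × (Fin d → ℝ) | ‖z.1‖ₑ ^ q < h z.2})
    (measurableSet_lt (by fun_prop) (by fun_prop))

lemma volume_coneBody (hh : Measurable h) : volume (coneBody h) =
    ENNReal.ofReal (2 / (d + 1)) * ∫⁻ y, h y ^ (((d : ℝ) + 1) / (d + 2)) := by
  have hS := measurable_indicator_enorm_pow_lt hh (d + 2)
  have hvol := lintegral_indicator_coneBody_mul hh (F := 1) measurable_one
  simp only [Pi.one_apply, mul_one] at hvol
  rw [lintegral_indicator_one (measurableSet_coneBody hh)] at hvol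
  rw [hvol, Measure.volume_eq_prod, lintegral_prod_symm _ (by fun_prop),
    ← lintegral_const_mul _ (by fun_prop)]
  refine lintegral_congr fun y => ?_
  refine (lintegral_enorm_pow_mul_indicator d (by omega) (h y)).trans ?_
  rw [Nat.cast_add, Nat.cast_ofNat]

lemma detIntegral_coneBody (hh : Measurable h) : detIntegral ((coneBody h).indicator 1) =
    ENNReal.ofReal (2 / (d + 2)) ^ (d + 1) * ∫⁻ y : Fin (d + 1) → Fin d → ℝ,
      (∏ i, h (y i)) * ‖(Matrix.of fun i => Matrix.vecCons 1 (y i)).det‖ₑ := by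
  have hS := measurable_indicator_enorm_pow_lt hh (d + 2)
  have hradial (y : Fin d → ℝ) :
      ∫⁻ r : ℝ, ‖r‖ₑ ^ d * {r : ℝ | ‖r‖ₑ ^ (d + 2) < h y}.indicator 1 r * ‖r‖ₑ =
        ENNReal.ofReal (2 / (d + 2)) * h y := by
    have hint := lintegral_enorm_pow_mul_indicator (d + 1) (q := d + 2) (by omega) (h y)
    rw [Nat.cast_add_one, Nat.cast_add, Nat.cast_ofNat, add_assoc, one_add_one_eq_two,
      div_self (by positivity), ENNReal.rpow_one] at hint
    rw [← hint]
    exact lintegral_congr fun r => by ring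
  rw [detIntegral, lintegral_prod_mul_eq_of_forall_lintegral_fst (by fun_prop)
    (measurable_one.indicator (measurableSet_coneBody hh)) (by fun_prop) (by fun_prop)
    measurable_enorm (fun G hG => lintegral_indicator_coneBody_mul hh hG) hradial (by fun_prop)
    (G := fun y => ‖(Matrix.of fun i => Matrix.vecCons 1 (y i)).det‖ₑ) (by fun_prop)
    fun z => enorm_det_of_smul _ _, ← lintegral_const_mul _ (by fun_prop)]
  refine lintegral_congr fun y => ?_
  rw [Finset.prod_mul_distrib, Finset.prod_const, Finset.card_univ, Fintype.card_fin, mul_assoc]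

lemma lintegral_rpow_pow_le_lintegral_prod_mul_enorm_det (hh : Measurable h) :
    (∫⁻ y, h y ^ (((d : ℝ) + 1) / (d + 2))) ^ (d + 2) ≤
      ENNReal.ofReal (sphereArea d ^ (d + 2) / (4 * sphereArea (d + 1) ^ d)) *
        ∫⁻ y : Fin (d + 1) → Fin d → ℝ,
          (∏ i, h (y i)) * ‖(Matrix.of fun i => Matrix.vecCons 1 (y i)).det‖ₑ := by
  have key := detIntegral_euclBall_mul_volume_pow_le (measurableSet_coneBody hh)
  rw [detIntegral_euclBall_one, volume_euclBall zero_le_one, volume_coneBody hh,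
    detIntegral_coneBody hh, ENNReal.ofReal_one, one_pow, one_mul, mul_pow, ← mul_assoc,
    ← mul_assoc] at key
  have hσ := sphereArea_pos d
  have hσ' := sphereArea_pos (d + 1)
  set A : ℝ := (2 / (d + 2)) ^ (d + 1) * (sphereArea (d + 1) / 2) ^ d * (2 / (d + 1)) ^ (d + 2)
    with hA
  have hA0 : 0 < A := by positivity
  rw [← ENNReal.ofReal_pow (by positivity), ← ENNReal.ofReal_mul (by positivity),
    ← ENNReal.ofReal_pow (by positivity), ← ENNReal.ofReal_pow (by positivity),
    ← ENNReal.ofReal_mul (by positivity), ← hA] at key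
  rw [← ENNReal.mul_le_mul_iff_right (ENNReal.ofReal_pos.2 hA0).ne' ENNReal.ofReal_ne_top]
  refine key.trans_eq ?_
  rw [← mul_assoc, ← ENNReal.ofReal_mul hA0.le, hA]
  congr 2
  generalize (d : ℝ) + 2 = a
  simp only [div_pow]
  field_simp
  ring

end ConeBody

section LevelRadon

variable {d : ℕ} {f : (Fin (d + 1) → ℝ) → ℝ≥0∞}

lemma enorm_mul_lintegral_comp_mul_add {r : ℝ} (hr : r ≠ 0) (b : ℝ) {F : ℝ → ℝ≥0∞}
    (hF : Measurable F) : ‖r‖ₑ * ∫⁻ x, F (r * x + b) = ∫⁻ x, F x := by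
  have h := lintegral_map (μ := volume) (f := fun x => F (x + b)) (by fun_prop)
    (measurable_const_mul r)
  rw [Real.map_volume_mul_left hr, lintegral_smul_measure, smul_eq_mul,
    lintegral_add_right_eq_self] at h
  rw [← h, ← mul_assoc, Real.enorm_eq_ofReal_abs, ← ENNReal.ofReal_mul (abs_nonneg _), ← abs_mul,
    mul_inv_cancel₀ hr, abs_one, ENNReal.ofReal_one, one_mul]

@[fun_prop]
lemma measurable_dotProduct {α : Type*} [MeasurableSpace α] {m : ℕ} {u v : α → Fin m → ℝ}
    (hu : Measurable u) (hv : Measurable v) : Measurable fun a => u a ⬝ᵥ v a := by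
  unfold dotProduct
  fun_prop

/-- The Radon transform in linear coordinates: the integral of `f` over the hyperplane `w ⬝ᵥ x = t`,
parametrised by the last `d` coordinates, with respect to the measure that disintegrates Lebesgue
measure along `x ↦ w ⬝ᵥ x`. It is meaningful only for `w 0 ≠ 0`, which excludes a null set. -/
def levelRadon (f : (Fin (d + 1) → ℝ) → ℝ≥0∞) (w : Fin (d + 1) → ℝ) (t : ℝ) : ℝ≥0∞ :=
  ‖(w 0)⁻¹‖ₑ * ∫⁻ y, f (Matrix.vecCons ((w 0)⁻¹ * (t - Matrix.vecTail w ⬝ᵥ y)) y)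

@[fun_prop]
lemma measurable_levelRadon (hf : Measurable f) {α : Type*} [MeasurableSpace α]
    {w : α → Fin (d + 1) → ℝ} (hw : Measurable w) {t : α → ℝ} (ht : Measurable t) :
    Measurable fun a => levelRadon f (w a) (t a) := by
  unfold levelRadon
  fun_prop

lemma levelRadon_vecCons_one (a : Fin d → ℝ) (t : ℝ) :
    levelRadon f (Matrix.vecCons 1 a) t = ∫⁻ y, f (Matrix.vecCons (t - a ⬝ᵥ y) y) := by
  simp only [levelRadon, Matrix.cons_val_zero, Matrix.tail_cons, inv_one, enorm_one, one_mul]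

lemma levelRadon_smul {r : ℝ} (hr : r ≠ 0) (w : Fin (d + 1) → ℝ) (t : ℝ) :
    levelRadon f (r • w) t = ‖r‖ₑ⁻¹ * levelRadon f w (r⁻¹ * t) := by
  have htail : Matrix.vecTail (r • w) = r • Matrix.vecTail w := rfl
  simp only [levelRadon, htail, Pi.smul_apply, smul_eq_mul, smul_dotProduct, mul_inv, enorm_mul,
    enorm_inv hr, mul_assoc]
  congr! 5 with y
  field_simp

lemma enorm_pow_mul_lintegral_levelRadon_smul_pow (hf : Measurable f) {r : ℝ} (hr : r ≠ 0)
    (w : Fin (d + 1) → ℝ) (q : ℕ) :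
    ‖r‖ₑ ^ q * ∫⁻ t, levelRadon f (r • w) t ^ (q + 1) = ∫⁻ t, levelRadon f w t ^ (q + 1) := by
  have hr' : ‖r‖ₑ * ‖r‖ₑ⁻¹ = 1 := ENNReal.mul_inv_cancel (enorm_ne_zero.2 hr) enorm_ne_top
  have hcomp := enorm_mul_lintegral_comp_mul_add (inv_ne_zero hr) 0
    (F := fun t => levelRadon f w t ^ (q + 1)) (by fun_prop)
  simp only [levelRadon_smul hr, mul_pow]
  rw [lintegral_const_mul _ (by fun_prop), ← hcomp, pow_succ, ← mul_assoc, ← mul_assoc, ← mul_pow,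
    hr', one_pow, one_mul, enorm_inv hr]
  simp only [add_zero]

lemma setLIntegral_levelRadon (hf : Measurable f) {w : Fin (d + 1) → ℝ} (hw : w 0 ≠ 0) {S : Set ℝ}
    (hS : MeasurableSet S) :
    ∫⁻ t in S, levelRadon f w t = ∫⁻ x, S.indicator 1 (w ⬝ᵥ x) * f x := by
  have : Measurable (S.indicator (1 : ℝ → ℝ≥0∞)) := measurable_one.indicator hS
  have hw' : ‖(w 0)⁻¹‖ₑ * ‖w 0‖ₑ = 1 := by rw [← enorm_mul, inv_mul_cancel₀ hw, enorm_one]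
  have hdot (s : ℝ) (y : Fin d → ℝ) :
      w ⬝ᵥ Matrix.vecCons s y = w 0 * s + Matrix.vecTail w ⬝ᵥ y := Fin.sum_univ_succ _
  calc ∫⁻ t in S, levelRadon f w t
      = ∫⁻ t, S.indicator 1 t * levelRadon f w t := by
        rw [← lintegral_indicator hS]
        exact lintegral_congr fun t => by by_cases ht : t ∈ S <;> simp [ht]
    _ = ∫⁻ t, ∫⁻ y, ‖(w 0)⁻¹‖ₑ * (S.indicator 1 t *
          f (Matrix.vecCons ((w 0)⁻¹ * (t - Matrix.vecTail w ⬝ᵥ y)) y)) := by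
        refine lintegral_congr fun t => ?_
        rw [levelRadon, mul_left_comm, ← lintegral_const_mul _ (by fun_prop),
          ← lintegral_const_mul _ (by fun_prop)]
    _ = ∫⁻ y, ∫⁻ t, ‖(w 0)⁻¹‖ₑ * (S.indicator 1 t *
          f (Matrix.vecCons ((w 0)⁻¹ * (t - Matrix.vecTail w ⬝ᵥ y)) y)) :=
        lintegral_lintegral_swap (by fun_prop)
    _ = ∫⁻ x, S.indicator 1 (w ⬝ᵥ x) * f x := by
        rw [lintegral_vecCons_symm (by fun_prop)]
        refine lintegral_congr fun y => ?_
        rw [lintegral_const_mul _ (by fun_prop),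
          ← enorm_mul_lintegral_comp_mul_add hw (Matrix.vecTail w ⬝ᵥ y) (by fun_prop), ← mul_assoc,
          hw', one_mul]
        simp only [add_sub_cancel_right, inv_mul_cancel_left₀ hw, hdot]

end LevelRadon

section GraphInequality

variable {d : ℕ}

lemma lintegral_lintegral_prod_dotProduct_mul_enorm_det_le {H : (Fin (d + 1) → ℝ) → ℝ≥0∞}
    (hH : Measurable H) :
    ∫⁻ c, ∫⁻ y : Fin (d + 1) → Fin d → ℝ,
        (∏ i, H (Matrix.vecCons (Matrix.vecCons 1 (y i) ⬝ᵥ c) (y i))) *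
          ‖(Matrix.of fun i => Matrix.vecCons 1 (y i)).det‖ₑ ≤
      (∫⁻ x, H x) ^ (d + 1) := by
  have hfibre (y : Fin (d + 1) → Fin d → ℝ) :
      ∫⁻ c, (∏ i, H (Matrix.vecCons (Matrix.vecCons 1 (y i) ⬝ᵥ c) (y i))) *
          ‖(Matrix.of fun i => Matrix.vecCons 1 (y i)).det‖ₑ ≤
        ∏ i, ∫⁻ s, H (Matrix.vecCons s (y i)) := by
    set M := Matrix.of fun i => Matrix.vecCons (1 : ℝ) (y i)
    rcases eq_or_ne M.det 0 with hM | hM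
    · simp [hM]
    · rw [lintegral_mul_const _ (by fun_prop), mul_comm, ← lintegral_prod_eq_prod (by fun_prop)]
      exact (enorm_det_mul_lintegral_comp_mulVec hM
        (F := fun s => ∏ i, H (Matrix.vecCons (s i) (y i))) (by fun_prop)).le
  calc _ = ∫⁻ y : Fin (d + 1) → Fin d → ℝ, ∫⁻ c,
          (∏ i, H (Matrix.vecCons (Matrix.vecCons 1 (y i) ⬝ᵥ c) (y i))) *
            ‖(Matrix.of fun i => Matrix.vecCons 1 (y i)).det‖ₑ :=
        lintegral_lintegral_swap (by fun_prop)
    _ ≤ ∫⁻ y : Fin (d + 1) → Fin d → ℝ, ∏ i, ∫⁻ s, H (Matrix.vecCons s (y i)) :=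
        lintegral_mono hfibre
    _ = (∫⁻ x, H x) ^ (d + 1) := by
        rw [lintegral_prod_eq_prod (w := fun _ y => ∫⁻ s, H (Matrix.vecCons s y)) (by fun_prop),
          lintegral_vecCons_symm hH, Finset.prod_const, Finset.card_univ, Fintype.card_fin]

lemma lintegral_lintegral_levelRadon_vecCons_one_pow {f : (Fin (d + 1) → ℝ) → ℝ≥0∞}
    (hf : Measurable f) (q : ℕ) :
    ∫⁻ a, ∫⁻ t, levelRadon f (Matrix.vecCons 1 a) t ^ q =
      ∫⁻ c, (∫⁻ y, f (Matrix.vecCons (Matrix.vecCons 1 y ⬝ᵥ c) y)) ^ q := by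
  have hdot (a y : Fin d → ℝ) (t : ℝ) :
      t - -a ⬝ᵥ y = Matrix.vecCons 1 y ⬝ᵥ Matrix.vecCons t a := by
    rw [Matrix.cons_dotProduct_cons, one_mul, neg_dotProduct, sub_neg_eq_add, dotProduct_comm]
  rw [lintegral_vecCons_symm (by fun_prop), ← lintegral_neg_eq_self]
  simp only [levelRadon_vecCons_one, hdot]

lemma lintegral_lintegral_levelRadon_vecCons_one_pow_le {f : (Fin (d + 1) → ℝ) → ℝ≥0∞}
    (hf : Measurable f) :
    ∫⁻ a, ∫⁻ t, levelRadon f (Matrix.vecCons 1 a) t ^ (d + 2) ≤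
      ENNReal.ofReal (sphereArea d ^ (d + 2) / (4 * sphereArea (d + 1) ^ d)) *
        (∫⁻ x, f x ^ (((d : ℝ) + 2) / (d + 1))) ^ (d + 1) := by
  have hpow (x : Fin (d + 1) → ℝ) :
      (f x ^ (((d : ℝ) + 2) / (d + 1))) ^ (((d : ℝ) + 1) / (d + 2)) = f x := by
    rw [← ENNReal.rpow_mul, div_mul_div_cancel₀ (by positivity), div_self (by positivity),
      ENNReal.rpow_one]
  rw [lintegral_lintegral_levelRadon_vecCons_one_pow hf]
  refine (lintegral_mono fun c => ?_).trans ((lintegral_const_mul _ (by fun_prop)).trans_le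
    (mul_le_mul_right (lintegral_lintegral_prod_dotProduct_mul_enorm_det_le (by fun_prop)) _))
  simpa only [hpow] using lintegral_rpow_pow_le_lintegral_prod_mul_enorm_det (h := fun y =>
    f (Matrix.vecCons (Matrix.vecCons 1 y ⬝ᵥ c) y) ^ (((d : ℝ) + 2) / (d + 1))) (by fun_prop)

end GraphInequality

section Radon

lemma measurePreserving_smul_add_coe_orthogonal {E : Type*} [NormedAddCommGroup E]
    [InnerProductSpace ℝ E] [FiniteDimensional ℝ E] [MeasurableSpace E] [BorelSpace E] {θ : E}
    (hθ : ‖θ‖ = 1) : MeasurePreserving fun p : ℝ × (ℝ ∙ θ)ᗮ => p.1 • θ + p.2 := by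
  have hline := (LinearIsometryEquiv.toSpanUnitSingleton (𝕜 := ℝ) θ hθ).measurePreserving
  have hsum := (Submodule.orthogonalDecomposition (ℝ ∙ θ)).symm.measurePreserving
  convert (hsum.comp (WithLp.volume_preserving_toLp (ℝ ∙ θ) (ℝ ∙ θ)ᗮ)).comp
    (hline.prod (MeasurePreserving.id (volume : Measure (ℝ ∙ θ)ᗮ))) using 1
  · funext p
    simp [Submodule.orthogonalDecomposition_symm_apply,
      LinearIsometryEquiv.toSpanUnitSingleton_apply]
  · exact Measure.volume_eq_prod _ _

variable {n : ℕ} {f : EuclideanSpace ℝ (Fin n) → ℝ≥0∞}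

lemma measurable_radon (hf : Measurable f) (θ : sphere (0 : EuclideanSpace ℝ (Fin n)) 1) :
    Measurable (Radon n f θ) := by
  unfold Radon
  fun_prop

lemma setLIntegral_radon (hf : Measurable f) (θ : sphere (0 : EuclideanSpace ℝ (Fin n)) 1)
    {S : Set ℝ} (hS : MeasurableSet S) :
    ∫⁻ t in S, Radon n f θ t = ∫⁻ x, S.indicator 1 (inner ℝ θ.1 x) * f x := by
  have : Measurable (S.indicator (1 : ℝ → ℝ≥0∞)) := measurable_one.indicator hS
  have hθ : ‖θ.1‖ = 1 := norm_eq_of_mem_sphere θ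
  have hinner (t : ℝ) (y : (ℝ ∙ θ.1)ᗮ) : inner ℝ θ.1 (t • θ.1 + y) = t := by
    rw [inner_add_right, inner_smul_right, real_inner_self_eq_norm_sq, hθ,
      Submodule.mem_orthogonal_singleton_iff_inner_right.1 y.2, one_pow, mul_one, add_zero]
  rw [← (measurePreserving_smul_add_coe_orthogonal hθ).lintegral_comp (by fun_prop),
    Measure.volume_eq_prod, lintegral_prod _ (by fun_prop), ← lintegral_indicator hS]
  refine lintegral_congr fun t => ?_
  simp only [hinner]
  by_cases ht : t ∈ S <;> simp [ht, Radon]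

lemma radon_ae_eq_levelRadon {d : ℕ} {f : EuclideanSpace ℝ (Fin (d + 1)) → ℝ≥0∞}
    (hf : Measurable f) {θ : sphere (0 : EuclideanSpace ℝ (Fin (d + 1))) 1} (hθ : θ.1 0 ≠ 0) :
    Radon (d + 1) f θ =ᵐ[volume] levelRadon (fun x => f (WithLp.toLp 2 x)) θ.1.ofLp := by
  refine ae_eq_of_forall_setLIntegral_eq_of_sigmaFinite (measurable_radon hf θ) (by fun_prop)
    fun S hS _ => ?_
  have : Measurable (S.indicator (1 : ℝ → ℝ≥0∞)) := measurable_one.indicator hS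
  rw [setLIntegral_radon hf θ hS, setLIntegral_levelRadon (by fun_prop) hθ hS,
    ← (PiLp.volume_preserving_toLp (Fin (d + 1))).lintegral_comp (by fun_prop)]
  simp only [EuclideanSpace.inner_eq_star_dotProduct, star_trivial, dotProduct_comm]

end Radon

section SphereIntegral

variable {E : Type*} [NormedAddCommGroup E] [NormedSpace ℝ E] [FiniteDimensional ℝ E]
  [MeasurableSpace E] [BorelSpace E] {μ : Measure E} [μ.IsAddHaarMeasure]

lemma lintegral_eq_lintegral_toSphere [Nontrivial E] {F : E → ℝ≥0∞} (hF : Measurable F) :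
    ∫⁻ x, F x ∂μ = ∫⁻ θ : sphere (0 : E) 1, ∫⁻ r in Set.Ioi (0 : ℝ),
      ‖r‖ₑ ^ (Module.finrank ℝ E - 1) * F (r • θ.1) ∂volume ∂μ.toSphere := by
  have hpolar := μ.measurePreserving_homeomorphUnitSphereProd.lintegral_comp
    (f := fun p => F (p.2.1 • p.1.1)) (by fun_prop)
  simp only [← homeomorphUnitSphereProd_symm_apply_coe, Homeomorph.symm_apply_apply] at hpolar
  rw [lintegral_subtype_comap (measurableSet_singleton _).compl, restrict_compl_singleton] at hpolar
  simp only [homeomorphUnitSphereProd_symm_apply_coe] at hpolar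
  rw [hpolar, lintegral_prod _ (by fun_prop)]
  refine lintegral_congr fun θ => ?_
  rw [Measure.volumeIoiPow, lintegral_withDensity_eq_lintegral_mul _ (by fun_prop) (by fun_prop),
    ← lintegral_subtype_comap measurableSet_Ioi]
  refine lintegral_congr fun r => ?_
  rw [Pi.mul_apply, ENNReal.ofReal_pow r.2.le, Real.enorm_eq_ofReal r.2.le]

lemma lintegral_toSphere_of_homogeneous [Nontrivial E] {G : E → ℝ≥0∞} (hG : Measurable G)
    (hhom : ∀ r : ℝ, 0 < r → ∀ x, ‖r‖ₑ ^ Module.finrank ℝ E * G (r • x) = G x) :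
    ∫⁻ θ : sphere (0 : E) 1, G θ ∂μ.toSphere =
      ∫⁻ x, (ball 0 1).indicator 1 x * (‖x‖ₑ * G x) ∂μ := by
  have : Measurable ((ball (0 : E) 1).indicator (1 : E → ℝ≥0∞)) :=
    measurable_one.indicator measurableSet_ball
  rw [lintegral_eq_lintegral_toSphere (E := E) (by fun_prop)]
  refine lintegral_congr fun θ => ?_
  have hradial : ∀ r ∈ Set.Ioi (0 : ℝ), ‖r‖ₑ ^ (Module.finrank ℝ E - 1) *
      ((ball 0 1).indicator 1 (r • θ.1) * (‖r • θ.1‖ₑ * G (r • θ.1))) =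
        (Set.Iio 1).indicator (fun _ => G θ) r := by
    intro r (hr : 0 < r)
    have hθ : ‖θ.1‖ = 1 := norm_eq_of_mem_sphere θ
    have hmem : r • θ.1 ∈ ball 0 1 ↔ r < 1 := by
      rw [mem_ball_zero_iff, norm_smul, hθ, mul_one, Real.norm_of_nonneg hr.le]
    have hnorm : ‖r • θ.1‖ₑ = ‖r‖ₑ := by
      rw [enorm_smul, ← ofReal_norm θ.1, hθ, ENNReal.ofReal_one, mul_one]
    rw [hnorm, mul_left_comm, ← mul_assoc (_ ^ _), pow_sub_one_mul Module.finrank_pos.ne',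
      hhom r hr]
    by_cases h : r < 1 <;> simp [hmem, h]
  rw [setLIntegral_congr_fun measurableSet_Ioi hradial, lintegral_indicator measurableSet_Iio,
    Measure.restrict_restrict measurableSet_Iio, Set.Iio_inter_Ioi, setLIntegral_const,
    Real.volume_Ioo, sub_zero, ENNReal.ofReal_one, mul_one]

variable {d : ℕ}

lemma lintegral_toSphere_eq_two_mul_lintegral_vecCons_one {G : (Fin (d + 1) → ℝ) → ℝ≥0∞}
    (hG : Measurable G) (hhom : ∀ r : ℝ, r ≠ 0 → ∀ x, ‖r‖ₑ ^ (d + 1) * G (r • x) = G x) :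
    ∫⁻ θ : sphere (0 : EuclideanSpace ℝ (Fin (d + 1))) 1, G θ.1.ofLp ∂volume.toSphere =
      2 * ∫⁻ y, G (Matrix.vecCons 1 y) := by
  have : Measurable ((ball (0 : EuclideanSpace ℝ (Fin (d + 1))) 1).indicator
    (1 : EuclideanSpace ℝ (Fin (d + 1)) → ℝ≥0∞)) := measurable_one.indicator measurableSet_ball
  rw [lintegral_toSphere_of_homogeneous
      (G := fun x : EuclideanSpace ℝ (Fin (d + 1)) => G x.ofLp) (by fun_prop) fun r hr x => by
      rw [finrank_euclideanSpace_fin, WithLp.ofLp_smul, hhom r hr.ne'],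
    ← (PiLp.volume_preserving_toLp (Fin (d + 1))).lintegral_comp (by fun_prop),
    lintegral_eq_lintegral_smul_vecCons_one (by fun_prop), Measure.volume_eq_prod,
    lintegral_prod_symm _ (by fun_prop), ← lintegral_const_mul _ (by fun_prop)]
  refine lintegral_congr fun y => ?_
  set v : EuclideanSpace ℝ (Fin (d + 1)) := WithLp.toLp 2 (Matrix.vecCons 1 y) with hv
  have hofLp : v.ofLp = Matrix.vecCons 1 y := rfl
  have hv0 : ‖v‖ₑ ≠ 0 := enorm_ne_zero.2 fun h => one_ne_zero (congrArg (· 0) h)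
  have hmem (r : ℝ) : r • v ∈ ball 0 1 ↔ ‖r‖ₑ < ‖v‖ₑ⁻¹ := by
    rw [mem_ball_zero_iff, ← ENNReal.ofReal_lt_one, ofReal_norm, enorm_smul, ← one_div,
      ENNReal.lt_div_iff_mul_lt (.inl hv0) (.inl enorm_ne_top)]
  calc _ = ∫⁻ r in {r : ℝ | ‖r‖ₑ < ‖v‖ₑ⁻¹}, ‖r‖ₑ ^ 0 * (‖v‖ₑ * G v.ofLp) := by
        rw [← lintegral_indicator (measurableSet_lt (by fun_prop) measurable_const)]
        refine lintegral_congr_ae ?_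
        filter_upwards [Measure.ae_ne volume (0 : ℝ)] with r hr
        rw [WithLp.toLp_smul, ← hv, ← hhom r hr v.ofLp, enorm_smul, pow_succ]
        by_cases h : ‖r‖ₑ < ‖v‖ₑ⁻¹ <;>
          simp [hmem, h, hofLp, mul_assoc, mul_left_comm, -Matrix.smul_cons]
    _ = 2 * G (Matrix.vecCons 1 y) := by
        rw [lintegral_mul_const _ (by fun_prop), setLIntegral_enorm_pow, zero_add, pow_one,
          Nat.cast_zero, zero_add, div_one, ENNReal.ofReal_ofNat, mul_assoc, ← mul_assoc _ ‖v‖ₑ,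
          ENNReal.inv_mul_cancel hv0 enorm_ne_top, one_mul]

lemma ae_toSphere_apply_zero_ne_zero :
    ∀ᵐ θ : sphere (0 : EuclideanSpace ℝ (Fin (d + 1))) 1 ∂volume.toSphere, θ.1 0 ≠ 0 := by
  have hmeas : MeasurableSet {θ : sphere (0 : EuclideanSpace ℝ (Fin (d + 1))) 1 | θ.1 0 = 0} :=
    measurableSet_eq_fun (by fun_prop) measurable_const
  let H : Submodule ℝ (EuclideanSpace ℝ (Fin (d + 1))) :=
    (EuclideanSpace.proj (𝕜 := ℝ) (0 : Fin (d + 1)) :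
      EuclideanSpace ℝ (Fin (d + 1)) →L[ℝ] ℝ).ker
  have hH : H ≠ ⊤ := fun h => by
    have hmem : EuclideanSpace.single 0 1 ∈ H := h ▸ Submodule.mem_top
    simp [H] at hmem
  rw [ae_iff]
  simp only [not_not]
  rw [Measure.toSphere_apply' _ hmeas]
  refine mul_eq_zero.2 (.inr (measure_mono_null ?_ (Measure.addHaar_submodule volume H hH)))
  rintro _ ⟨r, _, _, ⟨θ, hθ : θ.1 0 = 0, rfl⟩, rfl⟩
  simp [H, hθ]

lemma toSphere_univ_eq_sphereArea :
    (volume : Measure (EuclideanSpace ℝ (Fin (d + 1)))).toSphere Set.univ =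
      ENNReal.ofReal (sphereArea d) := by
  rw [Measure.toSphere_apply_univ, volume_ball_eq_sphereArea, finrank_euclideanSpace_fin,
    ENNReal.ofReal_one, one_pow, one_mul, ← ENNReal.ofReal_natCast,
    ← ENNReal.ofReal_mul (by positivity), Nat.cast_add_one, mul_div_cancel₀ _ (by positivity)]

end SphereIntegral

lemma lintegral_lintegral_radon_pow_le {d : ℕ} {f : EuclideanSpace ℝ (Fin (d + 1)) → ℝ≥0∞}
    (hf : Measurable f) :
    ∫⁻ θ, ∫⁻ t, Radon (d + 1) f θ t ^ (d + 2) ∂volume ∂sphMeasure (d + 1) ≤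
      ENNReal.ofReal (sphereArea d ^ (d + 1) / (2 * sphereArea (d + 1) ^ d)) *
        (∫⁻ x, f x ^ (((d : ℝ) + 2) / (d + 1))) ^ (d + 1) := by
  have hσ := sphereArea_pos d
  set g : (Fin (d + 1) → ℝ) → ℝ≥0∞ := fun x => f (WithLp.toLp 2 x)
  have hg : Measurable g := by fun_prop
  have hslopes : ∫⁻ θ : sphere (0 : EuclideanSpace ℝ (Fin (d + 1))) 1,
      ∫⁻ t, Radon (d + 1) f θ t ^ (d + 2) ∂volume ∂volume.toSphere =
        2 * ∫⁻ a, ∫⁻ t, levelRadon g (Matrix.vecCons 1 a) t ^ (d + 2) := by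
    rw [← lintegral_toSphere_eq_two_mul_lintegral_vecCons_one
      (G := fun w => ∫⁻ t, levelRadon g w t ^ (d + 2)) (by fun_prop)
      fun r hr w => enorm_pow_mul_lintegral_levelRadon_smul_pow hg hr w (d + 1)]
    refine lintegral_congr_ae (ae_toSphere_apply_zero_ne_zero.mono fun θ hθ => ?_)
    exact lintegral_congr_ae ((radon_ae_eq_levelRadon hf hθ).fun_comp (· ^ (d + 2)))
  have hnorm := (PiLp.volume_preserving_toLp (Fin (d + 1))).lintegral_comp
    (f := fun x => f x ^ (((d : ℝ) + 2) / (d + 1))) (by fun_prop)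
  have hconst : sphereArea d ^ (d + 1) / (2 * sphereArea (d + 1) ^ d) =
      (sphereArea d)⁻¹ * 2 * (sphereArea d ^ (d + 2) / (4 * sphereArea (d + 1) ^ d)) := by
    have hσ' := sphereArea_pos (d + 1)
    field_simp
    ring
  rw [sphMeasure, lintegral_smul_measure, toSphere_univ_eq_sphereArea, smul_eq_mul, hslopes,
    ← hnorm, hconst, ENNReal.ofReal_mul (by positivity), ENNReal.ofReal_mul (by positivity),
    ENNReal.ofReal_inv_of_pos hσ, ENNReal.ofReal_ofNat, mul_assoc, mul_assoc]
  gcongr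
  exact lintegral_lintegral_levelRadon_vecCons_one_pow_le hg

/-- The sharp `L^{(n+1)/n} → L^{n+1}` estimate of Oberlin–Stein, Christ, Drury and Drouot for
the hyperplane Radon transform, with the sharp constant
`Ω = (σ_{n-1}^n / (2 σ_n^{n-1}))^{1/(n+1)}`. -/
theorem stmt5 (n : ℕ) (hn : 2 ≤ n) (Ω : ℝ)
    (hΩ : Ω = (sphereArea (n - 1) ^ n / (2 * sphereArea n ^ (n - 1))) ^ (1 / ((n : ℝ) + 1)))
    (f : EuclideanSpace ℝ (Fin n) → ℝ≥0∞) (hf : Measurable f) :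
    (∫⁻ θ, ∫⁻ t : ℝ, Radon n f θ t ^ ((n : ℝ) + 1) ∂volume ∂(sphMeasure n)) ^
        (1 / ((n : ℝ) + 1)) ≤
      ENNReal.ofReal Ω *
        (∫⁻ x, f x ^ (((n : ℝ) + 1) / n)) ^ ((n : ℝ) / ((n : ℝ) + 1)) := by
  obtain ⟨d, rfl⟩ : ∃ d, n = d + 1 := ⟨n - 1, by omega⟩
  have hexp : ((d + 1 : ℕ) : ℝ) + 1 = (d + 2 : ℕ) := by push_cast; ring
  have hC : 0 ≤ sphereArea d ^ (d + 1) / (2 * sphereArea (d + 1) ^ d) := by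
    have := sphereArea_pos d
    have := sphereArea_pos (d + 1)
    positivity
  have key := ENNReal.rpow_le_rpow (lintegral_lintegral_radon_pow_le hf)
    (show 0 ≤ 1 / ((d + 2 : ℕ) : ℝ) by positivity)
  rw [ENNReal.mul_rpow_of_nonneg _ _ (by positivity), ← ENNReal.rpow_natCast _ (d + 1),
    ← ENNReal.rpow_mul, mul_one_div, ENNReal.ofReal_rpow_of_nonneg hC (by positivity)] at key
  simp only [hΩ, hexp, ENNReal.rpow_natCast, Nat.add_sub_cancel]
  simpa only [Nat.cast_add, Nat.cast_one, Nat.cast_ofNat] using key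
end
end
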